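/- arXiv:2303.02628 — 2 statements merged into one kernel-verified Lean document; each statement's English description precedes it below -/
import Mathlib

section
/- Fix m ∈ ℕ and 1 ≤ k ≤ m. Let (F_n) be a sequence in the finitely generated Wiener chaos of degree m: F_n = P_n(N^{(n)}), N^{(n)} ~ γ_{K_n}, P_n in the degree-m Hermite span. For independent standard Gaussians (G_{j,i})_{1≤j≤k, 1≤i≤K_n} independent of N^{(n)}, set ♯^k[F_n] := Σ_{i_1,…,i_k=1}^{K_n} ∂_{i_1}⋯∂_{i_k} P_n(N^{(n)}) · G_{1,i_1} ⋯ G_{k,i_k}. If the laws of F_n converge weakly to N(0,1), then the laws of ♯^k[F_n] converge weakly to N(0, σ²) with σ² = m(m−1)⋯(m−k+1). -/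
open MeasureTheory ProbabilityTheory MvPolynomial Filter Topology
open scoped ENNReal NNReal

noncomputable def gaussPi (ι : Type) [Fintype ι] : Measure (ι → ℝ) :=
  Measure.pi fun _ => gaussianReal 0 1

noncomputable def hermiteProd {K : ℕ} (k : Fin K → ℕ) : MvPolynomial (Fin K) ℝ :=
  ∏ i, Polynomial.aeval (MvPolynomial.X i) (Polynomial.hermite (k i))

noncomputable def chaos (K m : ℕ) : Submodule ℝ (MvPolynomial (Fin K) ℝ) :=
  Submodule.span ℝ {P | ∃ k : Fin K → ℕ, ∑ i, k i = m ∧ P = hermiteProd k}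

noncomputable def sqField {ι : Type} [Fintype ι] (P : MvPolynomial ι ℝ) (x : ι → ℝ) : ℝ :=
  ∑ i, (eval x (pderiv i P)) ^ 2

def TendstoInLaw {E : Type} [MeasurableSpace E] [TopologicalSpace E]
    (μs : ℕ → Measure E) (μ : Measure E) : Prop :=
  ∀ f : BoundedContinuousFunction E ℝ,
    Tendsto (fun n => ∫ x, f x ∂μs n) atTop (𝓝 (∫ x, f x ∂μ))

/-- Iterated partial derivative of a multivariate polynomial along a tuple of directions. -/
noncomputable def pderivMulti {K k : ℕ} (i : Fin k → Fin K) (P : MvPolynomial (Fin K) ℝ) :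
    MvPolynomial (Fin K) ℝ :=
  (List.ofFn i).foldr (fun idx Q => pderiv idx Q) P

/-- The `k`-times iterated sharp operator `♯^k[F]`, viewed as a polynomial in the original Gaussian
coordinates (`Sum.inl`) and the fresh independent Gaussian coordinates `G_{j,i}` (`Sum.inr`). -/
noncomputable def sharpPoly {K : ℕ} (k : ℕ) (P : MvPolynomial (Fin K) ℝ) :
    MvPolynomial (Fin K ⊕ Fin k × Fin K) ℝ :=
  ∑ i : Fin k → Fin K,
    rename Sum.inl (pderivMulti i P) * ∏ j, MvPolynomial.X (Sum.inr (j, i j))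



lemma int_pow1 (n : ℕ) : Integrable (fun x : ℝ => x ^ n) (gaussianReal 0 1) := by
  rcases Nat.eq_zero_or_pos n with h | h
  · subst h; simp
  have := (memLp_id_gaussianReal (μ := 0) (v := 1) (n : ℝ≥0)).integrable_norm_pow (by omega)
  refine this.mono' (by fun_prop) ?_
  filter_upwards with x
  simp

lemma int_pdf (n : ℕ) : Integrable (fun x : ℝ => x ^ n * gaussianPDFReal 0 1 x) := by
  have h := int_pow1 n
  rw [gaussianReal_of_var_ne_zero _ one_ne_zero,
    integrable_withDensity_iff_integrable_smul' (measurable_gaussianPDF 0 1)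
      (by filter_upwards with x using gaussianPDF_lt_top)] at h
  refine h.congr ?_
  filter_upwards with x
  simp [toReal_gaussianPDF, mul_comm]

lemma deriv_pdf (x : ℝ) : HasDerivAt (gaussianPDFReal 0 1) (-x * gaussianPDFReal 0 1 x) x := by
  have h1 : HasDerivAt (fun x : ℝ => -(x - 0) ^ 2 / (2 * ((1 : ℝ≥0) : ℝ))) (-x) x := by
    have := (((hasDerivAt_id x).sub_const 0).pow 2).neg.div_const (2 * ((1 : ℝ≥0) : ℝ))
    refine this.congr_deriv ?_
    simp
    ring
  have h2 := h1.exp.const_mul ((√(2 * Real.pi * ((1 : ℝ≥0) : ℝ)))⁻¹)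
  rw [gaussianPDFReal_def]
  refine h2.congr_deriv ?_
  ring

lemma mom_rec (n : ℕ) : ∫ x : ℝ, x ^ (n + 1) ∂gaussianReal 0 1
    = n * ∫ x : ℝ, x ^ (n - 1) ∂gaussianReal 0 1 := by
  rw [integral_gaussianReal_eq_integral_smul one_ne_zero,
    integral_gaussianReal_eq_integral_smul one_ne_zero]
  have := integral_mul_deriv_eq_deriv_mul_of_integrable (u := fun x : ℝ => x ^ n)
    (v := gaussianPDFReal 0 1) (u' := fun x => n * x ^ (n - 1))
    (v' := fun x => -x * gaussianPDFReal 0 1 x) (fun x _ => hasDerivAt_pow n x) (fun x _ => deriv_pdf x)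
    ?_ ?_ (int_pdf n)
  · rw [← integral_const_mul]
    simp only [smul_eq_mul]
    have h2 : ∀ x : ℝ, gaussianPDFReal 0 1 x * x ^ (n + 1)
        = - (x ^ n * (-x * gaussianPDFReal 0 1 x)) := by intro x; ring
    simp_rw [h2]
    rw [integral_neg, this, neg_neg]
    congr 1; ext x; ring
  · refine (int_pdf (n + 1)).neg.congr ?_
    filter_upwards with x
    simp; ring
  · refine ((int_pdf (n - 1)).const_mul n).congr ?_
    filter_upwards with x
    simp; ring

instance gaussPi_prob (ι : Type) [Fintype ι] : IsProbabilityMeasure (gaussPi ι) := by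
  unfold gaussPi; infer_instance

lemma eval_mono {ι : Type} [Fintype ι] (s : ι →₀ ℕ) (a : ℝ) (x : ι → ℝ) :
    eval x (monomial s a) = a * ∏ i, x i ^ s i := by
  rw [eval_monomial, Finsupp.prod_fintype _ _ (by simp)]

lemma int_poly {ι : Type} [Fintype ι] (P : MvPolynomial ι ℝ) :
    Integrable (fun x => eval x P) (gaussPi ι) := by
  induction P using MvPolynomial.induction_on' with
  | monomial s a =>
    simp_rw [eval_mono]
    refine Integrable.const_mul ?_ a
    exact Integrable.fintype_prod (f := fun i (x : ℝ) => x ^ s i) fun i => int_pow1 (s i)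
  | add p q hp hq =>
    simp only [map_add]
    exact hp.add hq

noncomputable def Ex {ι : Type} [Fintype ι] : MvPolynomial ι ℝ →ₗ[ℝ] ℝ where
  toFun P := ∫ x, eval x P ∂gaussPi ι
  map_add' P Q := by
    simp only [map_add]
    exact integral_add (int_poly P) (int_poly Q)
  map_smul' c P := by
    simp only [smul_eval, RingHom.id_apply, smul_eq_mul]
    exact integral_const_mul _ _

lemma Ex_def {ι : Type} [Fintype ι] (P : MvPolynomial ι ℝ) :
    Ex P = ∫ x, eval x P ∂gaussPi ι := rfl

lemma Ex_mono {ι : Type} [Fintype ι] (s : ι →₀ ℕ) (a : ℝ) :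
    Ex (monomial s a) = a * ∏ i, ∫ x : ℝ, x ^ s i ∂gaussianReal 0 1 := by
  rw [Ex_def]
  simp_rw [eval_mono]
  rw [integral_const_mul]
  congr 1
  exact integral_fintype_prod_eq_prod (fun i (x : ℝ) => x ^ s i)

lemma Ex_ibp {ι : Type} [Fintype ι] (i : ι) (P : MvPolynomial ι ℝ) :
    Ex (X i * P) = Ex (pderiv i P) := by
  classical
  induction P using MvPolynomial.induction_on' with
  | monomial s a =>
    rw [pderiv_monomial, X, monomial_mul, Ex_mono, Ex_mono,
      ← Finset.mul_prod_erase _ _ (Finset.mem_univ i),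
      ← Finset.mul_prod_erase _ _ (Finset.mem_univ i)]
    have h1 : ∏ x ∈ Finset.univ.erase i,
        ∫ y : ℝ, y ^ (Finsupp.single i 1 + s : ι →₀ ℕ) x ∂gaussianReal 0 1
        = ∏ x ∈ Finset.univ.erase i,
        ∫ y : ℝ, y ^ (s - Finsupp.single i 1 : ι →₀ ℕ) x ∂gaussianReal 0 1 := by
      refine Finset.prod_congr rfl fun j hj => ?_
      have hj : i ≠ j := (Finset.ne_of_mem_erase hj).symm
      simp [Finsupp.single_eq_of_ne' hj]
    rw [h1]
    have h2 : ∫ y : ℝ, y ^ (Finsupp.single i 1 + s : ι →₀ ℕ) i ∂gaussianReal 0 1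
        = s i * ∫ y : ℝ, y ^ (s - Finsupp.single i 1 : ι →₀ ℕ) i ∂gaussianReal 0 1 := by
      have := mom_rec (s i)
      simpa [add_comm] using this
    rw [h2]; ring
  | add p q hp hq =>
    rw [mul_add, map_add, map_add, map_add, hp, hq]

lemma Ex_one {ι : Type} [Fintype ι] : Ex (1 : MvPolynomial ι ℝ) = 1 := by
  simp [Ex_def]

lemma Ex_sq_nonneg {ι : Type} [Fintype ι] (P : MvPolynomial ι ℝ) : 0 ≤ Ex (P * P) := by
  rw [Ex_def]
  refine integral_nonneg fun x => ?_
  simp [mul_self_nonneg]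

/-- Ornstein-Uhlenbeck operator on polynomials. -/
noncomputable def Lop {ι : Type} [Fintype ι] (P : MvPolynomial ι ℝ) : MvPolynomial ι ℝ :=
  ∑ i, (pderiv i (pderiv i P) - X i * pderiv i P)

/-- Carre du champ. -/
noncomputable def Gam {ι : Type} [Fintype ι] (P Q : MvPolynomial ι ℝ) : MvPolynomial ι ℝ :=
  ∑ i, pderiv i P * pderiv i Q

lemma Ex_L {ι : Type} [Fintype ι] (P Q : MvPolynomial ι ℝ) : Ex (Q * Lop P) = - Ex (Gam Q P) := by
  unfold Lop Gam
  rw [Finset.mul_sum, map_sum, map_sum, ← Finset.sum_neg_distrib]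
  refine Finset.sum_congr rfl fun i _ => ?_
  have h := Ex_ibp i (Q * pderiv i P)
  have h2 : Q * (pderiv i (pderiv i P) - X i * pderiv i P)
    = Q * (pderiv i (pderiv i P)) - X i * (Q * pderiv i P) := by ring
  rw [h2, map_sub, h, Derivation.leibniz, map_add]
  simp only [smul_eq_mul]
  rw [mul_comm (pderiv i P) (pderiv i Q)]
  ring

lemma Gam_comm {ι : Type} [Fintype ι] (P Q : MvPolynomial ι ℝ) : Gam P Q = Gam Q P := by
  unfold Gam; simp_rw [mul_comm]

lemma Ex_L_symm {ι : Type} [Fintype ι] (P Q : MvPolynomial ι ℝ) :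
    Ex (Q * Lop P) = Ex (Lop Q * P) := by
  rw [mul_comm (Lop Q), Ex_L, Ex_L, Gam_comm]

lemma Lop_add {ι : Type} [Fintype ι] (P Q : MvPolynomial ι ℝ) : Lop (P + Q) = Lop P + Lop Q := by
  unfold Lop
  rw [← Finset.sum_add_distrib]
  refine Finset.sum_congr rfl fun i _ => ?_
  simp only [map_add]; ring

lemma Lop_smul {ι : Type} [Fintype ι] (c : ℝ) (P : MvPolynomial ι ℝ) :
    Lop (c • P) = c • Lop P := by
  unfold Lop
  rw [Finset.smul_sum]
  refine Finset.sum_congr rfl fun i _ => ?_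
  simp only [Derivation.map_smul, smul_sub, mul_smul_comm]

lemma Lop_mul {ι : Type} [Fintype ι] (P Q : MvPolynomial ι ℝ) :
    Lop (P * Q) = P * Lop Q + Q * Lop P + 2 * Gam P Q := by
  unfold Lop Gam
  simp only [Finset.mul_sum]
  rw [← Finset.sum_add_distrib, ← Finset.sum_add_distrib]
  refine Finset.sum_congr rfl fun i _ => ?_
  simp only [Derivation.leibniz, smul_eq_mul, map_add]
  ring

noncomputable def LopL {ι : Type} [Fintype ι] : MvPolynomial ι ℝ →ₗ[ℝ] MvPolynomial ι ℝ where
  toFun := Lop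
  map_add' := Lop_add
  map_smul' := Lop_smul

lemma LopL_apply {ι : Type} [Fintype ι] (P : MvPolynomial ι ℝ) : LopL P = Lop P := rfl


lemma totDeg_pderiv_mono {ι : Type} [Fintype ι] (i : ι) (s : ι →₀ ℕ) (a : ℝ) (d : ℕ)
    (hs : (s.sum fun _ e => e) ≤ d + 1) : (pderiv i (monomial s a)).totalDegree ≤ d := by
  classical
  rw [pderiv_monomial]
  by_cases h : s i = 0
  · simp [h]
  refine (totalDegree_monomial_le _ _).trans ?_
  rw [Finsupp.sum_fintype _ _ (by simp)] at hs ⊢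
  rw [← Finset.add_sum_erase _ _ (Finset.mem_univ i)] at hs ⊢
  have h1 : ∑ x ∈ Finset.univ.erase i, id ((s - Finsupp.single i 1 : ι →₀ ℕ) x)
      = ∑ x ∈ Finset.univ.erase i, s x := by
    refine Finset.sum_congr rfl fun j hj => ?_
    have hj : i ≠ j := (Finset.ne_of_mem_erase hj).symm
    simp [Finsupp.single_eq_of_ne' hj]
  rw [h1]
  simp
  omega

lemma totDeg_pderiv {ι : Type} [Fintype ι] (i : ι) (P : MvPolynomial ι ℝ) (d : ℕ)
    (hs : P.totalDegree ≤ d + 1) : (pderiv i P).totalDegree ≤ d := by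
  rw [P.as_sum, map_sum]
  exact totalDegree_finsetSum_le fun s h =>
    totDeg_pderiv_mono i s _ d ((le_totalDegree h).trans hs)

lemma sum_X_pderiv {ι : Type} [Fintype ι] (s : ι →₀ ℕ) (a : ℝ) :
    ∑ i, X i * pderiv i (monomial s a) = ((s.sum fun _ e => e : ℕ) : ℝ) • monomial s a := by
  simp_rw [X_mul_pderiv_monomial]
  rw [← Finset.sum_smul, Finsupp.sum_fintype _ _ (by simp)]
  rw [Nat.cast_smul_eq_nsmul]

lemma Ldeg {ι : Type} [Fintype ι] (P : MvPolynomial ι ℝ) (d : ℕ)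
    (hs : P.totalDegree ≤ d + 1) : (Lop P + ((d : ℝ) + 1) • P).totalDegree ≤ d := by
  have h : Lop P + ((d : ℝ) + 1) • P = ∑ s ∈ P.support,
      (Lop (monomial s (coeff s P)) + ((d : ℝ) + 1) • monomial s (coeff s P)) := by
    rw [Finset.sum_add_distrib, ← Finset.smul_sum, ← P.as_sum]
    congr 1
    simp_rw [← LopL_apply]
    rw [← map_sum, ← P.as_sum]
  rw [h]
  refine totalDegree_finsetSum_le fun s h => ?_
  have h1 := (le_totalDegree h).trans hs
  generalize coeff s P = a
  have h2 : Lop (monomial s a) + ((d : ℝ) + 1) • monomial s a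
      = ∑ i, pderiv i (pderiv i (monomial s a)) +
        ((d : ℝ) + 1 - ((s.sum fun _ e => e : ℕ) : ℝ)) • monomial s a := by
    unfold Lop
    rw [Finset.sum_sub_distrib, sum_X_pderiv, sub_smul]
    abel
  rw [h2]
  refine (totalDegree_add _ _).trans (max_le ?_ ?_)
  · refine totalDegree_finsetSum_le fun i _ => ?_
    exact totDeg_pderiv i _ d ((totDeg_pderiv_mono i s a d h1).trans (by omega))
  · rcases h1.lt_or_eq with h3 | h3
    · refine (totalDegree_smul_le _ _).trans ((totalDegree_monomial_le _ _).trans ?_)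
      exact Nat.lt_succ_iff.mp h3
    · rw [h3]; simp

lemma Lop_sub {ι : Type} [Fintype ι] (P Q : MvPolynomial ι ℝ) : Lop (P - Q) = Lop P - Lop Q :=
  (LopL (ι := ι)).map_sub P Q

lemma Lop_sum {ι κ : Type} [Fintype ι] (s : Finset κ) (f : κ → MvPolynomial ι ℝ) :
    Lop (∑ i ∈ s, f i) = ∑ i ∈ s, Lop (f i) :=
  map_sum (LopL (ι := ι)) f s

lemma Lop_C {ι : Type} [Fintype ι] (a : ℝ) : Lop (C a : MvPolynomial ι ℝ) = 0 := by
  simp [Lop]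

lemma decomp {ι : Type} [Fintype ι] (d : ℕ) : ∀ R : MvPolynomial ι ℝ, R.totalDegree ≤ d →
    ∃ q : ℕ → MvPolynomial ι ℝ, (∀ j, Lop (q j) = (-(j : ℝ)) • q j) ∧
      R = ∑ j ∈ Finset.range (d + 1), q j := by
  induction d with
  | zero =>
    intro R hR
    have := totalDegree_eq_zero_iff_eq_C.mp (Nat.le_zero.mp hR)
    refine ⟨fun j => if j = 0 then R else 0, ?_, by simp⟩
    intro j
    by_cases hj : j = 0
    · subst hj; simp; rw [this, Lop_C]
    · simp [hj]; simpa using Lop_C (ι := ι) 0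
  | succ d ih =>
    intro R hR
    obtain ⟨r, hr, hsum⟩ := ih _ (Ldeg R d hR)
    set T := ∑ j ∈ Finset.range (d + 1), (((d : ℝ) + 1 - j)⁻¹) • r j with hT
    have hLT : Lop T + ((d : ℝ) + 1) • T = Lop R + ((d : ℝ) + 1) • R := by
      rw [hsum, hT, Lop_sum, Finset.smul_sum, ← Finset.sum_add_distrib]
      refine Finset.sum_congr rfl fun j hj => ?_
      have hj' : (j : ℝ) < d + 1 := by exact_mod_cast Finset.mem_range.mp hj
      have : (d : ℝ) + 1 - j ≠ 0 := by linarith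
      rw [Lop_smul, hr, smul_smul, smul_smul, ← add_smul]
      rw [show ((d : ℝ) + 1 - j)⁻¹ * -(j : ℝ) + (d + 1) * ((d : ℝ) + 1 - j)⁻¹ = 1 by
        field_simp; ring, one_smul]
    refine ⟨fun j => if j = d + 1 then R - T else (((d : ℝ) + 1 - j)⁻¹) • r j, ?_, ?_⟩
    · intro j
      by_cases hj : j = d + 1
      · subst hj
        simp only [if_true]
        rw [Lop_sub, smul_sub]
        push_cast
        rw [neg_smul, neg_smul]
        rw [eq_comm, ← sub_eq_zero]
        have := sub_eq_zero.mpr hLT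
        rw [← this]; abel
      · simp only [hj, if_false]
        rw [Lop_smul, hr, smul_comm]
    · rw [Finset.sum_range_succ]
      simp only [if_true]
      have : ∑ j ∈ Finset.range (d + 1),
          (if j = d + 1 then R - T else (((d : ℝ) + 1 - j)⁻¹) • r j) = T := by
        refine Finset.sum_congr rfl fun j hj => ?_
        have := Finset.mem_range.mp hj
        rw [if_neg (by omega)]
      rw [this]; abel

lemma eigen_orth {ι : Type} [Fintype ι] {p q : MvPolynomial ι ℝ} {a b : ℝ} (hab : a ≠ b)
    (hp : Lop p = a • p) (hq : Lop q = b • q) : Ex (p * q) = 0 := by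
  have h := Ex_L_symm q p
  rw [hp, hq, mul_smul_comm, smul_mul_assoc, map_smul, map_smul] at h
  simp only [smul_eq_mul] at h
  have : (b - a) * Ex (p * q) = 0 := by linarith
  rcases mul_eq_zero.mp this with h | h
  · exact absurd (by linarith) hab
  · exact h

lemma spec_ineq {ι : Type} [Fintype ι] (m : ℕ) (R A : MvPolynomial ι ℝ)
    (hR : R.totalDegree ≤ 2 * m) (hA : A = (1 / 2 : ℝ) • Lop R + (m : ℝ) • R) :
    Ex (A * A) ≤ m * Ex (R * A) := by
  obtain ⟨q, hq, hs⟩ := decomp (2 * m) R hR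
  have hA' : A = ∑ j ∈ Finset.range (2 * m + 1), ((m : ℝ) - j / 2) • q j := by
    rw [hA, hs, Lop_sum, Finset.smul_sum, Finset.smul_sum, ← Finset.sum_add_distrib]
    refine Finset.sum_congr rfl fun j _ => ?_
    rw [hq, smul_smul, ← add_smul]; congr 1; ring
  have horth : ∀ i j, i ≠ j → Ex (q i * q j) = 0 := fun i j hij =>
    eigen_orth (by simpa using hij) (hq i) (hq j)
  have key : ∀ f : ℕ → ℝ, Ex ((∑ j ∈ Finset.range (2 * m + 1), (f j) • q j) * A)
      = ∑ j ∈ Finset.range (2 * m + 1), f j * ((m : ℝ) - j / 2) * Ex (q j * q j) := by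
    intro f
    rw [Finset.sum_mul, map_sum]
    refine Finset.sum_congr rfl fun i hi => ?_
    rw [hA', Finset.mul_sum, map_sum, Finset.sum_eq_single i]
    · rw [smul_mul_smul_comm, map_smul, smul_eq_mul]
    · intro j _ hj
      rw [smul_mul_smul_comm, map_smul, horth i j hj.symm, smul_zero]
    · intro h; exact absurd hi h
  have k1 := key fun j => (m : ℝ) - j / 2
  rw [← hA'] at k1
  have k2 := key fun _ => 1
  simp only [one_smul] at k2
  rw [← hs] at k2
  rw [k1, k2, Finset.mul_sum]
  refine Finset.sum_le_sum fun j hj => ?_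
  have hj' : (j : ℝ) ≤ 2 * m := by exact_mod_cast Nat.lt_succ_iff.mp (Finset.mem_range.mp hj)
  have h0 : (0 : ℝ) ≤ j := Nat.cast_nonneg j
  have he := Ex_sq_nonneg (q j)
  have h1 : 0 ≤ ((m : ℝ) - j / 2) := by linarith
  have : ((m : ℝ) - j / 2) * ((m : ℝ) - j / 2) ≤ m * ((m : ℝ) - j / 2) :=
    mul_le_mul_of_nonneg_right (by linarith) h1
  calc _ ≤ (m * ((m : ℝ) - j / 2)) * Ex (q j * q j) := mul_le_mul_of_nonneg_right this he
    _ = _ := by ring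

lemma eigen_deg {ι : Type} [Fintype ι] (m : ℕ) (P : MvPolynomial ι ℝ)
    (hP : Lop P = (-(m : ℝ)) • P) : P.totalDegree ≤ m := by
  by_contra! h
  obtain ⟨d, hd⟩ : ∃ d, P.totalDegree = d + 1 := ⟨P.totalDegree - 1, by omega⟩
  have h1 := Ldeg P d hd.le
  rw [hP, ← add_smul] at h1
  have hne : -(m : ℝ) + (d + 1) ≠ 0 := by
    have : (m : ℝ) < d + 1 := by exact_mod_cast hd ▸ h
    linarith
  have h2 : P = (-(m : ℝ) + (d + 1))⁻¹ • ((-(m : ℝ) + (d + 1)) • P) := by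
    rw [smul_smul, inv_mul_cancel₀ hne, one_smul]
  have h3 := totalDegree_smul_le (-(m : ℝ) + (d + 1))⁻¹ ((-(m : ℝ) + (d + 1)) • P)
  rw [← h2] at h3
  omega

lemma Ex_Lop {ι : Type} [Fintype ι] (P : MvPolynomial ι ℝ) : Ex (Lop P) = 0 := by
  have := Ex_L P 1
  rw [one_mul] at this
  rw [this]
  simp [Gam]

lemma Ex_C {ι : Type} [Fintype ι] (a : ℝ) : Ex (C a : MvPolynomial ι ℝ) = a := by
  simp [Ex_def]

lemma Ex_C_mul {ι : Type} [Fintype ι] (a : ℝ) (P : MvPolynomial ι ℝ) : Ex (C a * P) = a * Ex P := by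
  rw [← smul_eq_C_mul, map_smul, smul_eq_mul]

/-- quantitative fourth moment bound -/
lemma fourth_moment {ι : Type} [Fintype ι] (m : ℕ) (P : MvPolynomial ι ℝ)
    (hP : Lop P = (-(m : ℝ)) • P) :
    Ex ((Gam P P - C (m * Ex (P ^ 2))) ^ 2) ≤ m ^ 2 / 3 * (Ex (P ^ 4) - 3 * Ex (P ^ 2) ^ 2) := by
  set v := Ex (P ^ 2) with hv
  have hQ : Lop (P ^ 2) = (-(2 * m : ℝ)) • P ^ 2 + 2 * Gam P P := by
    rw [pow_two, Lop_mul, hP]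
    simp only [smul_eq_C_mul, map_neg, map_mul, map_ofNat]; ring
  have hG : Gam P P = (1 / 2 : ℝ) • Lop (P ^ 2) + (m : ℝ) • P ^ 2 := by
    have h2 : (2 : MvPolynomial ι ℝ) * Gam P P = (2 : ℝ) • Gam P P := by
      rw [smul_eq_C_mul, map_ofNat]
    rw [hQ, h2, smul_add, smul_smul, smul_smul, show (1 / 2 : ℝ) * -(2 * m) = -m by ring]
    norm_num
  have hEG : Ex (Gam P P) = m * v := by
    rw [hG, map_add, map_smul, map_smul, Ex_Lop]; simp [hv]
  have h4 : (m : ℝ) * Ex (P ^ 4) = 3 * Ex (P ^ 2 * Gam P P) := by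
    have h := Ex_L P (P ^ 3)
    have hg : Gam (P ^ 3) P = (3 : ℝ) • (P ^ 2 * Gam P P) := by
      unfold Gam
      rw [Finset.mul_sum, Finset.smul_sum]
      refine Finset.sum_congr rfl fun i _ => ?_
      rw [Derivation.leibniz_pow]
      simp only [smul_eq_C_mul, map_ofNat, nsmul_eq_mul, smul_eq_mul]
      push_cast; ring
    rw [hg, hP, mul_smul_comm, map_smul, map_smul, ← pow_succ] at h
    simp only [smul_eq_mul] at h
    linarith
  have hdeg : (P ^ 2 - C v).totalDegree ≤ 2 * m := by
    refine (totalDegree_sub_C_le _ _).trans ((totalDegree_pow _ _).trans ?_)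
    have := eigen_deg m P hP
    omega
  have hs := spec_ineq m (P ^ 2 - C v) (Gam P P - C (m * v)) hdeg (by
    rw [Lop_sub, Lop_C, hG, sub_zero, smul_sub]
    simp only [smul_eq_C_mul, map_mul]; ring)
  rw [pow_two]
  refine hs.trans (le_of_eq ?_)
  have : (P ^ 2 - C v) * (Gam P P - C (m * v)) = P ^ 2 * Gam P P - C (m * v) * P ^ 2
      - C v * Gam P P + C (v * (m * v)) := by simp only [map_mul]; ring
  rw [this, map_add, map_sub, map_sub, Ex_C_mul, Ex_C_mul, Ex_C, hEG, ← hv]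
  linear_combination (m : ℝ) / 3 * h4.symm


lemma pd_comm {ι : Type} (i j : ι) (P : MvPolynomial ι ℝ) :
    pderiv i (pderiv j P) = pderiv j (pderiv i P) := by
  classical
  by_cases h : i = j
  · rw [h]
  ext s
  simp only [coeff_pderiv]
  have h1 : (s + Finsupp.single i 1 : ι →₀ ℕ) j = s j := by
    simp [Finsupp.single_eq_of_ne' h]
  have h2 : (s + Finsupp.single j 1 : ι →₀ ℕ) i = s i := by
    simp [Finsupp.single_eq_of_ne h]
  rw [h1, h2, add_right_comm]; ring

lemma Lop_pderiv {ι : Type} [Fintype ι] (i : ι) (P : MvPolynomial ι ℝ) :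
    Lop (pderiv i P) = pderiv i (Lop P) + pderiv i P := by
  classical
  unfold Lop
  rw [map_sum]
  have h : pderiv i P = ∑ j, if j = i then pderiv j P else 0 := by simp
  conv_rhs => arg 2; rw [h]
  rw [← Finset.sum_add_distrib]
  refine Finset.sum_congr rfl fun j _ => ?_
  rw [map_sub, pderiv_mul, pd_comm j i, pd_comm j i (pderiv j P)]
  by_cases hj : j = i
  · subst hj; simp; ring
  · simp [hj]

lemma pd_rename_zero {ι κ : Type} (e : ι → κ) (b : κ) (hb : b ∉ Set.range e)
    (Q : MvPolynomial ι ℝ) : pderiv b (rename e Q) = 0 := by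
  refine pderiv_eq_zero_of_notMem_vars fun h => ?_
  obtain ⟨i, _, hi⟩ := mem_vars_rename e Q h
  exact hb ⟨i, hi⟩

lemma Lop_rename {ι κ : Type} [Fintype ι] [Fintype κ] (e : ι → κ) (he : Function.Injective e)
    (Q : MvPolynomial ι ℝ) : Lop (rename e Q) = rename e (Lop Q) := by
  unfold Lop
  rw [map_sum]
  symm
  refine Fintype.sum_of_injective e he _ _ ?_ ?_
  · intro b hb
    simp [pd_rename_zero e b hb]
  · intro i
    rw [pderiv_rename he, pderiv_rename he]
    simp

lemma mp_comp {ι κ : Type} [Fintype ι] [Fintype κ] (e : ι → κ) (he : Function.Injective e) :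
    MeasurePreserving (fun (x : κ → ℝ) (i : ι) => x (e i)) (gaussPi κ) (gaussPi ι) := by
  classical
  refine ⟨by fun_prop, ?_⟩
  unfold gaussPi
  symm
  refine Measure.pi_eq fun s hs => ?_
  rw [Measure.map_apply (by fun_prop) (MeasurableSet.univ_pi hs)]
  have h : (fun (x : κ → ℝ) (i : ι) => x (e i)) ⁻¹' (Set.univ.pi s)
      = Set.univ.pi (fun b => ⋂ i, ⋂ (_ : e i = b), s i) := by
    ext x
    simp only [Set.mem_preimage, Set.mem_univ_pi, Set.mem_iInter]
    constructor
    · rintro h b i rfl; exact h i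
    · intro h i; exact h (e i) i rfl
  rw [h, Measure.pi_pi]
  symm
  refine Fintype.prod_of_injective e he _ _ ?_ ?_
  · intro b hb
    have : (⋂ i, ⋂ (_ : e i = b), s i) = Set.univ := by
      refine Set.eq_univ_of_forall fun x => ?_
      simp only [Set.mem_iInter]
      intro i hi; exact absurd ⟨i, hi⟩ hb
    rw [this, measure_univ]
  · intro i
    congr 1
    ext x
    simp only [Set.mem_iInter]
    constructor
    · intro h j hj; rwa [he hj]
    · intro h; exact h i rfl

lemma meas_eval {ι : Type} [Fintype ι] (P : MvPolynomial ι ℝ) :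
    Continuous (fun x : ι → ℝ => eval x P) := MvPolynomial.continuous_eval P

lemma Ex_rename {ι κ : Type} [Fintype ι] [Fintype κ] (e : ι → κ) (he : Function.Injective e)
    (Q : MvPolynomial ι ℝ) : Ex (rename e Q) = Ex Q := by
  rw [Ex_def, Ex_def, ← (mp_comp e he).map_eq, integral_map (mp_comp e he).measurable.aemeasurable
    (meas_eval Q).aestronglyMeasurable]
  simp_rw [eval_rename]
  rfl

section lin
variable {κ η : Type} [Fintype κ] [Fintype η] (a : η → κ) (D : η → MvPolynomial κ ℝ)

lemma pd_lin (ha : Function.Injective a) (hD : ∀ i j, pderiv (a i) (D j) = 0) (i : η) :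
    pderiv (a i) (∑ j, X (a j) * D j) = D i := by
  classical
  rw [map_sum, Finset.sum_eq_single i]
  · rw [pderiv_mul, hD]; simp
  · intro j _ hj
    rw [pderiv_mul, hD, pderiv_X_of_ne (fun h => hj (ha h))]; simp
  · simp

lemma pd_sq (hD : ∀ i j, pderiv (a i) (D j) = 0) (i : η) :
    pderiv (a i) (∑ j, D j ^ 2) = 0 := by
  rw [map_sum]
  refine Finset.sum_eq_zero fun j _ => ?_
  rw [pderiv_pow, hD]; simp

lemma lin_ibp (ha : Function.Injective a) (hD : ∀ i j, pderiv (a i) (D j) = 0)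
    (Q : MvPolynomial κ ℝ) :
    Ex ((∑ j, X (a j) * D j) * Q) = Ex (∑ j, D j * pderiv (a j) Q) := by
  rw [Finset.sum_mul, map_sum, map_sum]
  refine Finset.sum_congr rfl fun j _ => ?_
  rw [mul_assoc, Ex_ibp, pderiv_mul, hD, zero_mul, zero_add]

lemma lin_two (ha : Function.Injective a) (hD : ∀ i j, pderiv (a i) (D j) = 0) :
    Ex ((∑ j, X (a j) * D j) ^ 2) = Ex (∑ j, D j ^ 2) := by
  rw [pow_two, lin_ibp a D ha hD]
  simp_rw [pd_lin a D ha hD, ← pow_two]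

lemma lin_four (ha : Function.Injective a) (hD : ∀ i j, pderiv (a i) (D j) = 0) :
    Ex ((∑ j, X (a j) * D j) ^ 4) = 3 * Ex ((∑ j, D j ^ 2) ^ 2) := by
  set S := ∑ j, X (a j) * D j with hS
  set G := ∑ j, D j ^ 2 with hG
  have h1 : Ex (S ^ 4) = 3 * Ex (S * (S * G)) := by
    rw [show S ^ 4 = S * S ^ 3 by ring]
    rw [hS, lin_ibp a D ha hD, ← hS]
    rw [← smul_eq_mul, ← map_smul]
    congr 1
    rw [hG, Finset.mul_sum, Finset.mul_sum, Finset.smul_sum]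
    refine Finset.sum_congr rfl fun j _ => ?_
    rw [pderiv_pow, hS, pd_lin a D ha hD, ← hS, smul_eq_C_mul, map_ofNat]
    push_cast; ring
  rw [h1]
  congr 1
  rw [hS, lin_ibp a D ha hD, ← hS, pow_two]
  congr 1
  have hGG : G * G = ∑ j, D j ^ 2 * G := by rw [← Finset.sum_mul]
  rw [hGG]
  refine Finset.sum_congr rfl fun j _ => ?_
  rw [pderiv_mul, hS, pd_lin a D ha hD, ← hS, hG, pd_sq a D hD]
  ring

lemma lin_Lop (ha : Function.Injective a) (hD : ∀ i j, pderiv (a i) (D j) = 0) (m : ℝ)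
    (hL : ∀ i, Lop (D i) = (1 - m) • D i) :
    Lop (∑ j, X (a j) * D j) = (-m) • ∑ j, X (a j) * D j := by
  classical
  rw [Lop_sum, Finset.smul_sum]
  refine Finset.sum_congr rfl fun j _ => ?_
  have hG : Gam (X (a j)) (D j) = 0 := by
    unfold Gam
    refine Finset.sum_eq_zero fun b _ => ?_
    by_cases h : a j = b
    · rw [← h, hD]; simp
    · rw [pderiv_X_of_ne h]; simp
  have hX : Lop (X (a j) : MvPolynomial κ ℝ) = - X (a j) := by
    unfold Lop
    rw [Finset.sum_eq_single (a j)]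
    · simp
    · intro b _ hb
      rw [pderiv_X_of_ne hb.symm]; simp
    · simp
  rw [Lop_mul, hL, hX, hG]
  simp only [smul_eq_C_mul, map_sub, map_neg, map_one]
  ring
end lin

/-! ### structure of the iterated sharp operator -/

lemma pdM_succ {K k : ℕ} (g : Fin (k + 1) → Fin K) (P : MvPolynomial (Fin K) ℝ) :
    pderivMulti g P = pderiv (g 0) (pderivMulti (fun l => g l.succ) P) := by
  unfold pderivMulti
  rw [List.ofFn_succ, List.foldr_cons]

lemma pdM_insert {K : ℕ} (P : MvPolynomial (Fin K) ℝ) (i : Fin K) : ∀ (k : ℕ) (j : Fin (k + 1))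
    (f : Fin k → Fin K), pderivMulti (j.insertNth i f : Fin (k + 1) → Fin K) P
      = pderiv i (pderivMulti f P) := by
  intro k
  induction k with
  | zero =>
    intro j f
    rw [pdM_succ]
    have hj : j = 0 := Fin.fin_one_eq_zero j
    subst hj
    rw [Fin.insertNth_apply_same]
    congr 2
  | succ k ih =>
    intro j f
    induction j using Fin.cases with
    | zero =>
      rw [pdM_succ, Fin.insertNth_apply_same]
      congr 2
    | succ j =>
      rw [pdM_succ, pdM_succ f, pd_comm i, ← ih j]
      have e1 : (j.succ.insertNth i f : Fin (k + 1 + 1) → Fin K) 0 = f 0 := by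
        have := Fin.insertNth_apply_succAbove (α := fun _ => Fin K) j.succ i f 0
        rwa [Fin.succ_succAbove_zero] at this
      have e2 : (fun l : Fin (k + 1) => (j.succ.insertNth i f : Fin (k + 1 + 1) → Fin K) l.succ)
          = (j.insertNth i fun l => f l.succ : Fin (k + 1) → Fin K) := by
        funext l
        induction l using Fin.succAboveCases j with
        | x => rw [Fin.insertNth_apply_same, Fin.insertNth_apply_same]
        | p l =>
          rw [← Fin.succ_succAbove_succ, Fin.insertNth_apply_succAbove,
            Fin.insertNth_apply_succAbove]
      rw [e1, e2]

def emb {K k : ℕ} (j : Fin (k + 1)) : Fin K ⊕ Fin k × Fin K → Fin K ⊕ Fin (k + 1) × Fin K :=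
  Sum.map id (Prod.map j.succAbove id)

lemma emb_inj {K k : ℕ} (j : Fin (k + 1)) : Function.Injective (emb (K := K) j) :=
  Sum.map_injective.mpr ⟨Function.injective_id,
    Fin.succAbove_right_injective.prodMap Function.injective_id⟩

lemma emb_not {K k : ℕ} (j : Fin (k + 1)) (i : Fin K) :
    (Sum.inr (j, i) : Fin K ⊕ Fin (k + 1) × Fin K) ∉ Set.range (emb (K := K) j) := by
  rintro ⟨x | ⟨l, x⟩, h⟩
  · simp [emb] at h
  · simp [emb] at h

lemma pd_sharp {K k : ℕ} (P : MvPolynomial (Fin K) ℝ) (i : Fin K) :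
    pderiv (Sum.inl i) (sharpPoly k P) = ∑ f : Fin k → Fin K,
      rename Sum.inl (pderiv i (pderivMulti f P)) * ∏ j, MvPolynomial.X (Sum.inr (j, f j)) := by
  unfold sharpPoly
  rw [map_sum]
  refine Finset.sum_congr rfl fun f _ => ?_
  have : pderiv (Sum.inl i : Fin K ⊕ Fin k × Fin K)
      (∏ j, MvPolynomial.X (R := ℝ) (Sum.inr (j, f j))) = 0 := by
    have h : (∏ j, MvPolynomial.X (R := ℝ) (Sum.inr (j, f j)) :
        MvPolynomial (Fin K ⊕ Fin k × Fin K) ℝ)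
        = rename Sum.inr (∏ j, MvPolynomial.X (R := ℝ) (j, f j)) := by simp
    rw [h, pd_rename_zero _ _ (by simp)]
  rw [pderiv_mul, this, pderiv_rename Sum.inl_injective]
  simp

lemma sharp_succ {K k : ℕ} (P : MvPolynomial (Fin K) ℝ) (j : Fin (k + 1)) :
    sharpPoly (k + 1) P = ∑ i, X (Sum.inr (j, i)) *
      rename (emb j) (pderiv (Sum.inl i) (sharpPoly k P)) := by
  have h1 : sharpPoly (k + 1) P = ∑ x : Fin K × (Fin k → Fin K),
      rename Sum.inl (pderivMulti (j.insertNth x.1 x.2 : Fin (k + 1) → Fin K) P) *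
       ∏ l, MvPolynomial.X (Sum.inr (l, (j.insertNth x.1 x.2 : Fin (k + 1) → Fin K) l)) := by
    unfold sharpPoly
    rw [← (Fin.insertNthEquiv (fun _ => Fin K) j).sum_comp]
    rfl
  rw [h1, Fintype.sum_prod_type]
  refine Finset.sum_congr rfl fun i _ => ?_
  rw [pd_sharp, map_sum, Finset.mul_sum]
  refine Finset.sum_congr rfl fun f _ => ?_
  rw [pdM_insert, Fin.prod_univ_succAbove _ j, map_mul, rename_rename, map_prod]
  simp only [Fin.insertNth_apply_same, Fin.insertNth_apply_succAbove, rename_X]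
  have : (emb j ∘ Sum.inl : Fin K → Fin K ⊕ Fin (k + 1) × Fin K) = Sum.inl := rfl
  rw [this]
  simp only [emb, Sum.map_inr, Prod.map, id]
  ring

lemma sharp_zero {K : ℕ} (P : MvPolynomial (Fin K) ℝ) :
    sharpPoly 0 P = rename Sum.inl P := by
  unfold sharpPoly
  rw [Fintype.sum_unique]
  simp [pderivMulti]

lemma inr_inj {K k : ℕ} (j : Fin k) : Function.Injective
    (fun i : Fin K => (Sum.inr (j, i) : Fin K ⊕ Fin k × Fin K)) := by
  intro a b h
  simpa using h

lemma sharp_eigen {K : ℕ} (m : ℕ) (P : MvPolynomial (Fin K) ℝ) (hP : Lop P = (-(m : ℝ)) • P)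
    (k : ℕ) : Lop (sharpPoly k P) = (-(m : ℝ)) • sharpPoly k P := by
  induction k with
  | zero => rw [sharp_zero, Lop_rename _ Sum.inl_injective, hP, map_smul]
  | succ k ih =>
    rw [sharp_succ P 0]
    refine lin_Lop (fun i => Sum.inr ((0 : Fin (k + 1)), i)) _ (inr_inj 0) ?_ m ?_
    · intro i j
      exact pd_rename_zero _ _ (emb_not 0 i) _
    · intro i
      rw [Lop_rename _ (emb_inj 0), Lop_pderiv, ih, Derivation.map_smul, sub_smul, one_smul,
        neg_smul, map_add, map_neg, map_smul]
      abel

noncomputable def GN {K : ℕ} (k : ℕ) (P : MvPolynomial (Fin K) ℝ) :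
    MvPolynomial (Fin K ⊕ Fin k × Fin K) ℝ :=
  ∑ i, (pderiv (Sum.inl i) (sharpPoly k P)) ^ 2

lemma sharp_moments {K k : ℕ} (P : MvPolynomial (Fin K) ℝ) :
    Ex (sharpPoly (k + 1) P ^ 2) = Ex (GN k P) ∧
    Ex (sharpPoly (k + 1) P ^ 4) = 3 * Ex (GN k P ^ 2) := by
  have hD : ∀ i j : Fin K, pderiv (Sum.inr ((0 : Fin (k + 1)), i))
      (rename (emb 0) (pderiv (Sum.inl j) (sharpPoly k P))) = 0 := fun i j =>
    pd_rename_zero _ _ (emb_not 0 i) _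
  have hG : ∑ j : Fin K, (rename (emb (0 : Fin (k + 1))) (pderiv (Sum.inl j) (sharpPoly k P))) ^ 2
      = rename (emb 0) (GN k P) := by
    unfold GN; simp
  rw [sharp_succ P 0]
  constructor
  · rw [lin_two _ _ (inr_inj (0 : Fin (k + 1))) hD, hG, Ex_rename _ (emb_inj 0)]
  · rw [lin_four _ _ (inr_inj (0 : Fin (k + 1))) hD, hG, ← map_pow, Ex_rename _ (emb_inj 0)]

lemma Gam_sharp {K k : ℕ} (P : MvPolynomial (Fin K) ℝ) :
    Gam (sharpPoly (k + 1) P) (sharpPoly (k + 1) P)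
      = GN (k + 1) P + ∑ j, rename (emb j) (GN k P) := by
  unfold Gam
  rw [Fintype.sum_sum_type]
  simp only [← pow_two]
  congr 1
  rw [Fintype.sum_prod_type]
  refine Finset.sum_congr rfl fun j _ => ?_
  unfold GN
  rw [map_sum]
  refine Finset.sum_congr rfl fun i _ => ?_
  rw [map_pow, sharp_succ P j]
  congr 1
  exact pd_lin (fun i => Sum.inr (j, i)) _ (inr_inj j)
    (fun i l => pd_rename_zero _ _ (emb_not j i) _) i


lemma Ex_shift {ι : Type} [Fintype ι] (Q : MvPolynomial ι ℝ) (a : ℝ) :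
    Ex ((Q - C a) ^ 2) = Ex (Q ^ 2) - 2 * a * Ex Q + a ^ 2 := by
  have : (Q - C a) ^ 2 = Q ^ 2 - C (2 * a) * Q + C (a ^ 2) := by
    simp only [map_mul, map_pow, map_ofNat]; ring
  rw [this, map_add, map_sub, Ex_C_mul, Ex_C]

lemma Ex_Gam {ι : Type} [Fintype ι] (m : ℕ) (P : MvPolynomial ι ℝ)
    (hP : Lop P = (-(m : ℝ)) • P) : Ex (Gam P P) = m * Ex (P ^ 2) := by
  have := Ex_L P P
  rw [hP, mul_smul_comm, map_smul, ← pow_two, smul_eq_mul] at this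
  linarith

lemma gam_bound {ι : Type} [Fintype ι] (m : ℕ) (P : MvPolynomial ι ℝ)
    (hP : Lop P = (-(m : ℝ)) • P) (σ : ℝ) :
    Ex ((Gam P P - C (m * σ)) ^ 2) ≤ m ^ 2 / 3 * (Ex (P ^ 4) - 3 * Ex (P ^ 2) ^ 2)
      + m ^ 2 * (Ex (P ^ 2) - σ) ^ 2 := by
  have h := fourth_moment m P hP
  rw [Ex_shift, Ex_Gam m P hP] at h ⊢
  linarith

lemma Ex_mono_le {ι : Type} [Fintype ι] (P Q : MvPolynomial ι ℝ)
    (h : ∀ x, eval x P ≤ eval x Q) : Ex P ≤ Ex Q :=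
  integral_mono (int_poly P) (int_poly Q) h

lemma A_step {K k : ℕ} (m : ℕ) (P : MvPolynomial (Fin K) ℝ) (hP : Lop P = (-(m : ℝ)) • P)
    (σ : ℝ) : Ex ((GN (k + 1) P - C ((m - (k + 1)) * σ)) ^ 2)
      ≤ (2 * m ^ 2 + 2 * (k + 1) ^ 2) * Ex ((GN k P - C σ) ^ 2) := by
  have hS := sharp_eigen m P hP (k + 1)
  have h1 := gam_bound m _ hS σ
  rw [(sharp_moments P).1, (sharp_moments P).2] at h1
  have h1' : Ex ((Gam (sharpPoly (k + 1) P) (sharpPoly (k + 1) P) - C (m * σ)) ^ 2)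
      ≤ m ^ 2 * Ex ((GN k P - C σ) ^ 2) := by
    rw [Ex_shift (GN k P)]
    refine h1.trans (le_of_eq ?_)
    ring
  set a := Gam (sharpPoly (k + 1) P) (sharpPoly (k + 1) P) - C (m * σ) with ha
  set b := fun j : Fin (k + 1) => rename (emb j) (GN k P - C σ) with hb
  have hdec : GN (k + 1) P - C ((m - (k + 1)) * σ) = a - ∑ j, b j := by
    rw [ha, hb, Gam_sharp]
    simp only [map_sub, Finset.sum_sub_distrib, rename_C, Finset.sum_const, Finset.card_univ,
      Fintype.card_fin, nsmul_eq_mul, map_mul, map_add, map_one, map_natCast]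
    push_cast
    ring
  have hbE : ∀ j, Ex (b j ^ 2) = Ex ((GN k P - C σ) ^ 2) := by
    intro j
    rw [hb]
    simp only
    rw [← map_pow, Ex_rename _ (emb_inj j)]
  rw [hdec]
  have h2 : Ex ((a - ∑ j, b j) ^ 2) ≤ Ex (C (2 : ℝ) * a ^ 2 + C (2 * ((k : ℝ) + 1)) * ∑ j, b j ^ 2) := by
    refine Ex_mono_le _ _ fun x => ?_
    simp only [map_pow, map_sub, map_add, map_mul, map_sum, eval_C]
    have hc := sq_sum_le_card_mul_sum_sq (s := Finset.univ) (f := fun j => eval x (b j))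
    simp only [Finset.card_univ, Fintype.card_fin] at hc
    push_cast at hc
    nlinarith [sq_nonneg (eval x a + ∑ j, eval x (b j))]
  refine h2.trans ?_
  rw [map_add, Ex_C_mul, Ex_C_mul, map_sum]
  simp_rw [hbE]
  simp only [Finset.sum_const, Finset.card_univ, Fintype.card_fin, nsmul_eq_mul]
  push_cast
  nlinarith

lemma GN_zero {K : ℕ} (P : MvPolynomial (Fin K) ℝ) : GN 0 P = rename Sum.inl (Gam P P) := by
  unfold GN Gam
  rw [map_sum]
  refine Finset.sum_congr rfl fun i _ => ?_
  rw [sharp_zero, pderiv_rename Sum.inl_injective, ← pow_two, map_pow]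

lemma charFun_lin {η : Type} [Fintype η] (t : ℝ) (d : η → ℝ) :
    ∫ z : η → ℝ, Complex.exp (t * ((∑ i, z i * d i : ℝ) : ℂ) * Complex.I) ∂gaussPi η
      = ((Real.exp (-(t ^ 2 / 2) * ∑ i, d i ^ 2) : ℝ) : ℂ) := by
  have h : ∀ z : η → ℝ, Complex.exp (t * ((∑ i, z i * d i : ℝ) : ℂ) * Complex.I)
      = ∏ i, Complex.exp (((t * d i : ℝ) : ℂ) * (z i : ℂ) * Complex.I) := by
    intro z
    rw [← Complex.exp_sum]
    congr 1
    push_cast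
    rw [Finset.mul_sum, Finset.sum_mul]
    refine Finset.sum_congr rfl fun i _ => ?_
    ring
  simp_rw [h]
  have := integral_fintype_prod_eq_prod (μ := fun _ : η => gaussianReal 0 1)
    (fun i (x : ℝ) => Complex.exp (((t * d i : ℝ) : ℂ) * (x : ℂ) * Complex.I))
  unfold gaussPi
  rw [this]
  have h2 : ∀ i, ∫ x : ℝ, Complex.exp (((t * d i : ℝ) : ℂ) * (x : ℂ) * Complex.I) ∂gaussianReal 0 1
      = Complex.exp (-(t ^ 2 / 2) * (d i) ^ 2) := by
    intro i
    rw [← charFun_apply_real, charFun_gaussianReal]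
    congr 1
    push_cast
    ring
  simp_rw [h2]
  rw [← Complex.exp_sum]
  push_cast
  rw [Finset.mul_sum]

lemma charFun_sharp {K k : ℕ} (P : MvPolynomial (Fin K) ℝ) (t : ℝ) :
    charFun (Measure.map (fun y => eval y (sharpPoly (k + 1) P))
        (gaussPi (Fin K ⊕ Fin (k + 1) × Fin K))) t
      = ((∫ y, Real.exp (-(t ^ 2 / 2) * eval y (GN k P)) ∂gaussPi (Fin K ⊕ Fin k × Fin K) : ℝ) : ℂ) := by
  rw [charFun_apply_real, integral_map (meas_eval _).measurable.aemeasurable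
    (by fun_prop)]
  let e : (Fin K ⊕ Fin k × Fin K) ⊕ Fin K → Fin K ⊕ Fin (k + 1) × Fin K :=
    Sum.elim (emb 0) (fun i => Sum.inr (0, i))
  have he : Function.Injective e := by
    refine (emb_inj 0).sumElim (inr_inj 0) ?_
    intro a b h
    exact emb_not 0 b ⟨a, h⟩
  let D : Fin K → MvPolynomial (Fin K ⊕ Fin k × Fin K) ℝ :=
    fun i => pderiv (Sum.inl i) (sharpPoly k P)
  let h : ((Fin K ⊕ Fin k × Fin K) → ℝ) × (Fin K → ℝ) → ℂ := fun z =>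
    Complex.exp (t * ((∑ i, z.2 i * eval z.1 (D i) : ℝ) : ℂ) * Complex.I)
  have hc : Continuous h := by
    have : ∀ i, Continuous fun z : ((Fin K ⊕ Fin k × Fin K) → ℝ) × (Fin K → ℝ) =>
      eval z.1 (D i) := fun i => (meas_eval (D i)).comp continuous_fst
    fun_prop
  have hmp := (measurePreserving_sumPiEquivProdPi
    (fun _ : (Fin K ⊕ Fin k × Fin K) ⊕ Fin K => gaussianReal 0 1)).comp (mp_comp e he)
  have h1 : ∀ y, Complex.exp (t * ((eval y (sharpPoly (k + 1) P) : ℝ) : ℂ) * Complex.I)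
      = h (((MeasurableEquiv.sumPiEquivProdPi (fun _ => ℝ)) ∘ fun x i => x (e i)) y) := by
    intro y
    simp only [h]
    congr 4
    rw [sharp_succ P 0]
    simp only [map_sum, map_mul, eval_X, eval_rename]
    rfl
  simp_rw [h1]
  rw [← integral_map hmp.measurable.aemeasurable (f := h) hc.aestronglyMeasurable, hmp.map_eq,
    integral_prod]
  · have h2 : ∀ x, ∫ y, h (x, y) ∂(Measure.pi fun _ : Fin K => gaussianReal 0 1)
        = ((Real.exp (-(t ^ 2 / 2) * eval x (GN k P)) : ℝ) : ℂ) := by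
      intro x
      have := charFun_lin t (fun i => eval x (D i))
      simp only [gaussPi] at this
      simp only [h]
      rw [this]
      simp only [GN, map_sum, map_pow, D]
    simp_rw [h2]
    exact integral_ofReal
  · refine Integrable.of_bound hc.aestronglyMeasurable 1 ?_
    filter_upwards with z
    simp only [h]
    rw [← Complex.ofReal_mul, Complex.norm_exp_ofReal_mul_I]

lemma sq_int_le {Ω : Type} [MeasurableSpace Ω] (μ : Measure Ω) [IsProbabilityMeasure μ] (f : Ω → ℝ)
    (hf : MemLp f 2 μ) : (∫ x, f x ∂μ) ^ 2 ≤ ∫ x, f x ^ 2 ∂μ := by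
  have h := variance_nonneg f μ
  rw [variance_eq_sub hf] at h
  simp only [Pi.pow_apply] at h
  linarith

lemma exp_lip (a b : ℝ) (ha : 0 ≤ a) (hb : 0 ≤ b) :
    (Real.exp (-a) - Real.exp (-b)) ^ 2 ≤ (a - b) ^ 2 := by
  wlog h : a ≤ b generalizing a b
  · have := this b a hb ha (le_of_not_ge h)
    nlinarith
  have h1 : Real.exp (-b) ≤ Real.exp (-a) := Real.exp_le_exp.mpr (by linarith)
  have h2 : Real.exp (-b) = Real.exp (-a) * Real.exp (a - b) := by
    rw [← Real.exp_add]; congr 1; ring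
  have h3 := Real.add_one_le_exp (a - b)
  have h4 : Real.exp (-a) ≤ 1 := Real.exp_le_one_iff.mpr (by linarith)
  have h5 := Real.exp_pos (-a)
  have h6 : Real.exp (-a) - Real.exp (-b) ≤ b - a := by
    rw [h2]; nlinarith
  nlinarith

lemma exp_bound {ι : Type} [Fintype ι] (G : MvPolynomial ι ℝ) (hG : ∀ x, 0 ≤ eval x G) (c σ : ℝ)
    (hc : 0 ≤ c) (hσ : 0 ≤ σ) :
    (∫ y, Real.exp (-c * eval y G) ∂gaussPi ι - Real.exp (-c * σ)) ^ 2
      ≤ c ^ 2 * Ex ((G - C σ) ^ 2) := by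
  have hcont := meas_eval G
  have hb : ∀ y, ‖Real.exp (-c * eval y G)‖ ≤ 1 := by
    intro y
    rw [Real.norm_eq_abs, abs_of_pos (Real.exp_pos _), Real.exp_le_one_iff]
    nlinarith [hG y, mul_nonneg hc (hG y)]
  have hi : Integrable (fun y => Real.exp (-c * eval y G)) (gaussPi ι) :=
    Integrable.of_bound (by fun_prop) 1 (by filter_upwards with y using hb y)
  have h1 : ∫ y, Real.exp (-c * eval y G) ∂gaussPi ι - Real.exp (-c * σ)
      = ∫ y, (Real.exp (-c * eval y G) - Real.exp (-c * σ)) ∂gaussPi ι := by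
    rw [integral_sub hi (integrable_const _)]; simp
  rw [h1]
  have hm : MemLp (fun y => Real.exp (-c * eval y G) - Real.exp (-c * σ)) 2 (gaussPi ι) := by
    refine MemLp.of_bound (by fun_prop) (1 + Real.exp (-c * σ)) ?_
    filter_upwards with y
    refine (norm_sub_le _ _).trans (add_le_add (hb y) ?_)
    rw [Real.norm_eq_abs, abs_of_pos (Real.exp_pos _)]
  refine (sq_int_le _ _ hm).trans ?_
  rw [← Ex_C_mul, Ex_def]
  refine integral_mono hm.integrable_sq (int_poly _) fun y => ?_
  simp only [map_mul, map_pow, map_sub, eval_C]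
  have := exp_lip (c * eval y G) (c * σ) (mul_nonneg hc (hG y)) (mul_nonneg hc hσ)
  simp only [← neg_mul] at this
  nlinarith

lemma main_of_moments (m k : ℕ) (hk1 : 1 ≤ k) (hkm : k ≤ m) (K : ℕ → ℕ)
    (P : (n : ℕ) → MvPolynomial (Fin (K n)) ℝ)
    (hL : ∀ n, Lop (P n) = (-(m : ℝ)) • P n)
    (h2 : Tendsto (fun n => Ex (P n ^ 2)) atTop (𝓝 1))
    (h4 : Tendsto (fun n => Ex (P n ^ 4)) atTop (𝓝 3)) :
    TendstoInLaw
      (fun n => Measure.map (fun y => eval y (sharpPoly k (P n)))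
        (gaussPi (Fin (K n) ⊕ Fin k × Fin (K n))))
      (gaussianReal 0 (m.descFactorial k : ℝ≥0)) := by
  have hA : ∀ l, l + 1 ≤ m → Tendsto (fun n => Ex ((GN l (P n) -
      C ((m.descFactorial (l + 1) : ℕ) : ℝ)) ^ 2)) atTop (𝓝 0) := by
    intro l
    induction l with
    | zero =>
      intro _
      have hlim : Tendsto (fun n => (m : ℝ) ^ 2 / 3 * (Ex (P n ^ 4) - 3 * Ex (P n ^ 2) ^ 2)
          + m ^ 2 * (Ex (P n ^ 2) - 1) ^ 2) atTop (𝓝 0) := by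
        have := ((h4.sub ((h2.pow 2).const_mul 3)).const_mul ((m : ℝ) ^ 2 / 3)).add
          (((h2.sub_const 1).pow 2).const_mul ((m : ℝ) ^ 2))
        simpa using this
      refine squeeze_zero (fun n => ?_) (fun n => ?_) hlim
      · rw [pow_two]; exact Ex_sq_nonneg _
      · have := gam_bound m (P n) (hL n) 1
        refine le_trans (le_of_eq ?_) this
        rw [GN_zero, ← rename_C (σ := Fin (K n)) Sum.inl, ← map_sub, ← map_pow,
          Ex_rename _ Sum.inl_injective]
        simp
    | succ l ih =>
      intro hl
      have hlim := (ih (by omega)).const_mul (2 * (m : ℝ) ^ 2 + 2 * (l + 1) ^ 2)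
      rw [mul_zero] at hlim
      refine squeeze_zero (fun n => ?_) (fun n => ?_) hlim
      · rw [pow_two]; exact Ex_sq_nonneg _
      · have := A_step (k := l) m (P n) (hL n) ((m.descFactorial (l + 1) : ℕ) : ℝ)
        refine le_trans (le_of_eq ?_) this
        rw [Nat.descFactorial_succ m (l + 1)]
        rw [Nat.cast_mul, Nat.cast_sub (by omega)]
        push_cast
        rfl
  obtain ⟨l, rfl⟩ : ∃ l, k = l + 1 := ⟨k - 1, by omega⟩
  have hAl := hA l hkm
  set σ : ℝ := ((m.descFactorial (l + 1) : ℕ) : ℝ) with hσ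
  have hpm : ∀ n, IsProbabilityMeasure (Measure.map (fun y => eval y (sharpPoly (l + 1) (P n)))
        (gaussPi (Fin (K n) ⊕ Fin (l + 1) × Fin (K n)))) := fun n =>
    Measure.isProbabilityMeasure_map (meas_eval _).measurable.aemeasurable
  let μs : ℕ → ProbabilityMeasure ℝ := fun n => ⟨_, hpm n⟩
  let μ : ProbabilityMeasure ℝ :=
    ⟨gaussianReal 0 (m.descFactorial (l + 1) : ℝ≥0), inferInstance⟩
  have key : Tendsto μs atTop (𝓝 μ) := by
    refine ProbabilityMeasure.tendsto_of_tendsto_charFun fun t => ?_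
    change Tendsto (fun n => charFun (Measure.map (fun y => eval y (sharpPoly (l + 1) (P n)))
        (gaussPi (Fin (K n) ⊕ Fin (l + 1) × Fin (K n)))) t) atTop
        (𝓝 (charFun (gaussianReal 0 (m.descFactorial (l + 1) : ℝ≥0)) t))
    simp_rw [charFun_sharp]
    have hr : charFun (gaussianReal 0 (m.descFactorial (l + 1) : ℝ≥0)) t
        = ((Real.exp (-(t ^ 2 / 2) * σ) : ℝ) : ℂ) := by
      rw [charFun_gaussianReal]
      push_cast [hσ]
      congr 1
      ring
    rw [hr]
    refine (Complex.continuous_ofReal.tendsto _).comp ?_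
    rw [tendsto_iff_dist_tendsto_zero]
    have hlim := (hAl.const_mul ((t ^ 2 / 2) ^ 2)).sqrt
    rw [mul_zero, Real.sqrt_zero] at hlim
    refine squeeze_zero (fun n => dist_nonneg) (fun n => ?_) hlim
    rw [Real.dist_eq]
    refine Real.abs_le_sqrt ?_
    refine exp_bound (GN l (P n)) ?_ (t ^ 2 / 2) σ (by positivity) (by positivity)
    intro x
    unfold GN
    simp only [map_sum, map_pow]
    positivity
  intro f
  exact (ProbabilityMeasure.tendsto_iff_forall_integral_tendsto.mp key) f


lemma spec_sums {ι : Type} [Fintype ι] (d : ℕ) (R : MvPolynomial ι ℝ) (hR : R.totalDegree ≤ d) :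
    ∃ e : ℕ → ℝ, (∀ j, 0 ≤ e j) ∧ Ex (R * R) = ∑ j ∈ Finset.range (d + 1), e j ∧
      Ex (Gam R R) = ∑ j ∈ Finset.range (d + 1), j * e j ∧ (Ex R) ^ 2 = e 0 := by
  obtain ⟨q, hq, hs⟩ := decomp d R hR
  have horth : ∀ i j, i ≠ j → Ex (q i * q j) = 0 := fun i j hij =>
    eigen_orth (by simpa using hij) (hq i) (hq j)
  have key : ∀ f : ℕ → ℝ, Ex (R * (∑ j ∈ Finset.range (d + 1), (f j) • q j))
      = ∑ j ∈ Finset.range (d + 1), f j * Ex (q j * q j) := by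
    intro f
    rw [Finset.mul_sum, map_sum]
    refine Finset.sum_congr rfl fun i hi => ?_
    rw [hs, Finset.sum_mul, map_sum, Finset.sum_eq_single i]
    · rw [mul_smul_comm, map_smul, smul_eq_mul]
    · intro j _ hj
      rw [mul_smul_comm, map_smul, horth j i hj, smul_zero]
    · intro h; exact absurd hi h
  refine ⟨fun j => Ex (q j * q j), fun j => Ex_sq_nonneg _, ?_, ?_, ?_⟩
  · have := key fun _ => 1
    simp only [one_smul, one_mul] at this
    rwa [← hs] at this
  · have h1 := key fun j => -(j : ℝ)
    have h2 : ∑ j ∈ Finset.range (d + 1), (-(j : ℝ)) • q j = Lop R := by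
      rw [hs, Lop_sum]
      exact Finset.sum_congr rfl fun j _ => (hq j).symm
    rw [h2, Ex_L] at h1
    simp only [neg_mul, Finset.sum_neg_distrib, neg_inj] at h1
    exact h1
  · have h0 : Ex R = Ex (q 0) := by
      rw [hs, map_sum, Finset.sum_eq_single 0]
      · intro j _ hj
        have := Ex_Lop (q j)
        rw [hq j, map_smul, smul_eq_mul] at this
        rcases mul_eq_zero.mp this with h | h
        · simp at h; exact absurd h hj
        · exact h
      · intro h; simp at h
    have h1 := eigen_deg 0 (q 0) (hq 0)
    have h2 := totalDegree_eq_zero_iff_eq_C.mp (Nat.le_zero.mp h1)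
    rw [h0]
    simp only
    rw [h2, ← map_mul, Ex_C, Ex_C, pow_two]

lemma poincare {ι : Type} [Fintype ι] (R : MvPolynomial ι ℝ) :
    Ex (R * R) ≤ (Ex R) ^ 2 + Ex (Gam R R) := by
  obtain ⟨e, he, h1, h2, h3⟩ := spec_sums R.totalDegree R le_rfl
  rw [h1, h2, h3, Finset.sum_range_succ', Finset.sum_range_succ' (fun j : ℕ => (j : ℝ) * e j)]
  have : ∑ j ∈ Finset.range R.totalDegree, e (j + 1)
      ≤ ∑ j ∈ Finset.range R.totalDegree, ((j + 1 : ℕ) : ℝ) * e (j + 1) := by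
    refine Finset.sum_le_sum fun j _ => ?_
    have := he (j + 1)
    have hj : (0 : ℝ) ≤ j := Nat.cast_nonneg j
    push_cast
    nlinarith
  simp only [Nat.cast_zero, zero_mul, add_zero]
  linarith

lemma rev_poincare {ι : Type} [Fintype ι] (d : ℕ) (R : MvPolynomial ι ℝ)
    (hR : R.totalDegree ≤ d) : Ex (Gam R R) ≤ d * Ex (R * R) := by
  obtain ⟨e, he, h1, h2, h3⟩ := spec_sums d R hR
  rw [h1, h2, Finset.mul_sum]
  refine Finset.sum_le_sum fun j hj => ?_
  have : (j : ℝ) ≤ d := by exact_mod_cast Nat.lt_succ_iff.mp (Finset.mem_range.mp hj)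
  exact mul_le_mul_of_nonneg_right this (he j)

lemma hyper4 (d : ℕ) : ∃ c : ℝ, 0 ≤ c ∧ ∀ (ι κ : Type) [Fintype ι] [Fintype κ]
    (Q : κ → MvPolynomial ι ℝ), (∀ v, (Q v).totalDegree ≤ d) →
    Ex ((∑ v, Q v ^ 2) ^ 2) ≤ c * (Ex (∑ v, Q v ^ 2)) ^ 2 := by
  induction d with
  | zero =>
    refine ⟨1, zero_le_one, fun ι κ _ _ Q hQ => ?_⟩
    have : ∀ v, Q v = C (coeff 0 (Q v)) := fun v =>
      totalDegree_eq_zero_iff_eq_C.mp (Nat.le_zero.mp (hQ v))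
    have h2 : ∑ v, Q v ^ 2 = C (∑ v, (coeff 0 (Q v)) ^ 2) := by
      rw [map_sum]
      refine Finset.sum_congr rfl fun v _ => ?_
      rw [map_pow, ← this v]
    rw [h2, ← map_pow, Ex_C, Ex_C, one_mul]
  | succ d ih =>
    obtain ⟨c, hc, ih⟩ := ih
    refine ⟨2 + 16 * c * (d + 1) ^ 2, by positivity, fun ι κ _ _ Q hQ => ?_⟩
    set f := ∑ v, Q v ^ 2 with hf
    set g := ∑ p : ι × κ, (pderiv p.1 (Q p.2)) ^ 2 with hg
    have h1 := ih ι (ι × κ) (fun p => pderiv p.1 (Q p.2))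
      (fun p => totDeg_pderiv _ _ d (hQ p.2))
    rw [← hg] at h1
    have h2 : Ex g ≤ (d + 1) * Ex f := by
      have : g = ∑ v, Gam (Q v) (Q v) := by
        rw [hg, Fintype.sum_prod_type_right]
        unfold Gam
        simp_rw [pow_two]
      rw [this, hf, map_sum, map_sum, Finset.mul_sum]
      refine Finset.sum_le_sum fun v _ => ?_
      have := rev_poincare (d + 1) (Q v) (hQ v)
      rw [← pow_two] at this
      exact_mod_cast this
    have hg0 : 0 ≤ Ex g := by
      rw [Ex_def]
      refine integral_nonneg fun x => ?_
      simp only [hg, map_sum, map_pow]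
      positivity
    have h3 : Ex (Gam f f) ≤ Ex (C (1 / 2 : ℝ) * f ^ 2 + C (8 : ℝ) * g ^ 2) := by
      refine Ex_mono_le _ _ fun x => ?_
      have hd : ∀ i, eval x (pderiv i f) = 2 * ∑ v, eval x (Q v) * eval x (pderiv i (Q v)) := by
        intro i
        rw [hf, map_sum, map_sum, Finset.mul_sum]
        refine Finset.sum_congr rfl fun v _ => ?_
        rw [pow_two, Derivation.leibniz]
        simp only [smul_eq_mul, map_add, map_mul]
        ring
      have hcs : eval x (Gam f f) ≤ 4 * (eval x f * eval x g) := by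
        have hgx : eval x g = ∑ i, ∑ v, (eval x (pderiv i (Q v))) ^ 2 := by
          rw [hg, map_sum, Fintype.sum_prod_type]
          simp only [map_pow]
        have hfx : eval x f = ∑ v, (eval x (Q v)) ^ 2 := by
          rw [hf, map_sum]; simp only [map_pow]
        unfold Gam
        rw [map_sum, hgx, hfx, Finset.mul_sum, Finset.mul_sum]
        refine Finset.sum_le_sum fun i _ => ?_
        rw [map_mul, hd]
        have := Finset.sum_mul_sq_le_sq_mul_sq Finset.univ (fun v => eval x (Q v))
          (fun v => eval x (pderiv i (Q v)))
        nlinarith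
      refine hcs.trans ?_
      simp only [map_add, map_mul, map_pow, eval_C]
      nlinarith [sq_nonneg (eval x f - 4 * eval x g)]
    rw [map_add, Ex_C_mul, Ex_C_mul] at h3
    have h4 := poincare f
    rw [← pow_two] at h4
    have h5 : (Ex g) ^ 2 ≤ ((d + 1) * Ex f) ^ 2 := pow_le_pow_left₀ hg0 h2 2
    have h6 := mul_le_mul_of_nonneg_left h5 hc
    nlinarith

lemma hyper_scalar (d : ℕ) : ∃ c : ℝ, 0 ≤ c ∧ ∀ (ι : Type) [Fintype ι]
    (Q : MvPolynomial ι ℝ), Q.totalDegree ≤ d → Ex (Q ^ 4) ≤ c * (Ex (Q ^ 2)) ^ 2 := by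
  obtain ⟨c, hc, h⟩ := hyper4 d
  refine ⟨c, hc, fun ι _ Q hQ => ?_⟩
  have := h ι Unit (fun _ => Q) (fun _ => hQ)
  simpa [← pow_mul] using this

/-- eighth moment hypercontractive bound -/
lemma hyper8 (d : ℕ) : ∃ c : ℝ, 1 ≤ c ∧ ∀ (ι : Type) [Fintype ι]
    (Q : MvPolynomial ι ℝ), Q.totalDegree ≤ d → Ex (Q ^ 4) ≤ c * (Ex (Q ^ 2)) ^ 2 ∧
      Ex (Q ^ 8) ≤ c * (Ex (Q ^ 2)) ^ 4 := by
  obtain ⟨c, hc, h⟩ := hyper_scalar d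
  obtain ⟨c', hc', h'⟩ := hyper_scalar (2 * d)
  refine ⟨1 + c + c' * c ^ 2, by nlinarith [mul_nonneg hc' (sq_nonneg c)],
    fun ι _ Q hQ => ⟨(h ι Q hQ).trans ?_, ?_⟩⟩
  · refine mul_le_mul_of_nonneg_right ?_ (sq_nonneg _)
    nlinarith [mul_nonneg hc' (sq_nonneg c)]
  have h1 := h' ι (Q ^ 2) ((totalDegree_pow _ _).trans (by omega))
  rw [← pow_mul, ← pow_mul] at h1
  have h2 := h ι Q hQ
  have h0 : 0 ≤ Ex (Q ^ 4) := by
    have := Ex_sq_nonneg (Q ^ 2)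
    rwa [← pow_add] at this
  have h3 := pow_le_pow_left₀ h0 h2 2
  calc _ ≤ c' * Ex (Q ^ 4) ^ 2 := h1
    _ ≤ c' * (c * Ex (Q ^ 2) ^ 2) ^ 2 := mul_le_mul_of_nonneg_left h3 hc'
    _ = (c' * c ^ 2) * (Ex (Q ^ 2)) ^ 4 := by ring
    _ ≤ _ := mul_le_mul_of_nonneg_right (by linarith) (by positivity)


lemma hermite_deriv (n : ℕ) : Polynomial.derivative (Polynomial.hermite (n + 1))
    = ((n : Polynomial ℤ) + 1) * Polynomial.hermite n := by
  induction n with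
  | zero => simp
  | succ n ih =>
    rw [Polynomial.hermite_succ (n + 1), Polynomial.derivative_sub, Polynomial.derivative_mul, ih,
      Polynomial.derivative_X, Polynomial.derivative_mul, Polynomial.hermite_succ n]
    simp
    ring

lemma pd_aeval {ι : Type} [Fintype ι] (i j : ι) (p : Polynomial ℤ) :
    pderiv i (Polynomial.aeval (X j : MvPolynomial ι ℝ) p)
      = Polynomial.aeval (X j : MvPolynomial ι ℝ) (Polynomial.derivative p) * pderiv i (X j) := by
  induction p using Polynomial.induction_on' with
  | add p q hp hq => simp only [map_add, hp, hq, add_mul]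
  | monomial n a =>
    rw [Polynomial.aeval_monomial, Polynomial.derivative_monomial, Polynomial.aeval_monomial]
    simp [Derivation.leibniz, Derivation.leibniz_pow]
    ring

lemma Lop_hermite1 {ι : Type} [Fintype ι] (j : ι) (n : ℕ) :
    Lop (Polynomial.aeval (X j : MvPolynomial ι ℝ) (Polynomial.hermite n))
      = (-(n : ℝ)) • Polynomial.aeval (X j : MvPolynomial ι ℝ) (Polynomial.hermite n) := by
  classical
  unfold Lop
  rw [Finset.sum_eq_single j]
  · rcases n with _ | n
    · simp
    · have h1 : pderiv j (Polynomial.aeval (X j : MvPolynomial ι ℝ) (Polynomial.hermite (n + 1)))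
          = ((n : MvPolynomial ι ℝ) + 1) * Polynomial.aeval (X j) (Polynomial.hermite n) := by
        rw [pd_aeval, hermite_deriv]; simp
      rw [h1, Derivation.leibniz, pd_aeval, Polynomial.hermite_succ]
      simp [smul_eq_C_mul]
      ring
  · intro i _ hi
    rw [pd_aeval, pderiv_X_of_ne hi.symm]; simp
  · simp

lemma Lop_hermiteProd {K : ℕ} (k : Fin K → ℕ) :
    Lop (hermiteProd k) = (-((∑ i, k i : ℕ) : ℝ)) • hermiteProd k := by
  classical
  have : ∀ s : Finset (Fin K),
      Lop (∏ i ∈ s, Polynomial.aeval (X i : MvPolynomial (Fin K) ℝ) (Polynomial.hermite (k i)))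
        = (-((∑ i ∈ s, k i : ℕ) : ℝ)) •
          ∏ i ∈ s, Polynomial.aeval (X i : MvPolynomial (Fin K) ℝ) (Polynomial.hermite (k i)) ∧
      ∀ j ∉ s, pderiv j (∏ i ∈ s, Polynomial.aeval (X i : MvPolynomial (Fin K) ℝ)
        (Polynomial.hermite (k i))) = 0 := by
    intro s
    induction s using Finset.induction_on with
    | empty => simp [Lop]
    | insert a s ha ih =>
      obtain ⟨ih1, ih2⟩ := ih
      constructor
      · rw [Finset.prod_insert ha, Finset.sum_insert ha, Lop_mul, ih1, Lop_hermite1]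
        have : Gam (Polynomial.aeval (X a : MvPolynomial (Fin K) ℝ) (Polynomial.hermite (k a)))
          (∏ i ∈ s, Polynomial.aeval (X i : MvPolynomial (Fin K) ℝ)
            (Polynomial.hermite (k i))) = 0 := by
          unfold Gam
          refine Finset.sum_eq_zero fun i _ => ?_
          by_cases hi : i = a
          · subst hi; rw [ih2 _ ha, mul_zero]
          · rw [pd_aeval, pderiv_X_of_ne (Ne.symm hi)]; simp
        rw [this]
        simp only [smul_eq_C_mul]
        push_cast
        simp only [map_neg, map_add]
        ring
      · intro j hj
        rw [Finset.mem_insert, not_or] at hj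
        rw [Finset.prod_insert ha, Derivation.leibniz, ih2 j hj.2, pd_aeval,
          pderiv_X_of_ne (Ne.symm hj.1)]
        simp
  exact (this Finset.univ).1

lemma chaos_eigen {K m : ℕ} (P : MvPolynomial (Fin K) ℝ) (hP : P ∈ chaos K m) :
    Lop P = (-(m : ℝ)) • P := by
  unfold chaos at hP
  induction hP using Submodule.span_induction with
  | mem x h =>
    obtain ⟨k, hk, rfl⟩ := h
    rw [Lop_hermiteProd, hk]
  | zero => simpa using Lop_C (ι := Fin K) 0
  | add x y _ _ hx hy => rw [Lop_add, hx, hy, smul_add]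
  | smul a x _ hx => rw [Lop_smul, hx, smul_comm]


lemma law_bdd {μs : ℕ → Measure ℝ} {μ : Measure ℝ} (h : TendstoInLaw μs μ) (f : ℝ → ℝ)
    (hf : Continuous f) (T : ℝ) (hb : ∀ x, |f x| ≤ T) :
    Tendsto (fun n => ∫ x, f x ∂μs n) atTop (𝓝 (∫ x, f x ∂μ)) :=
  h (BoundedContinuousFunction.ofNormedAddCommGroup f hf T hb)

lemma sub_min_le (a T : ℝ) (hT : 0 < T) : a - min a T ≤ a ^ 2 / T := by
  rw [le_div_iff₀ hT]
  rcases le_total a T with h | h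
  · rw [min_eq_left h]; nlinarith [sq_nonneg a]
  · rw [min_eq_right h]; nlinarith

lemma trunc_err (ν : Measure ℝ) [IsProbabilityMeasure ν] (f : ℝ → ℝ) (hf : Continuous f)
    (h0 : ∀ x, 0 ≤ f x) (hi : Integrable (fun x => f x ^ 2) ν) (T : ℝ) (hT : 0 < T) :
    |∫ x, f x ∂ν - ∫ x, min (f x) T ∂ν| ≤ (∫ x, f x ^ 2 ∂ν) / T := by
  have hi1 : Integrable f ν := by
    refine ((integrable_const (1 : ℝ)).add hi).mono' hf.aestronglyMeasurable ?_
    filter_upwards with x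
    rw [Real.norm_eq_abs, abs_of_nonneg (h0 x)]
    simp only [Pi.add_apply]
    nlinarith [sq_nonneg (f x - 1)]
  have hi2 : Integrable (fun x => min (f x) T) ν := by
    refine hi1.mono' (hf.min continuous_const).aestronglyMeasurable ?_
    filter_upwards with x
    rw [Real.norm_eq_abs, abs_of_nonneg (le_min (h0 x) hT.le)]
    exact min_le_left _ _
  rw [← integral_sub hi1 hi2, abs_of_nonneg, ← integral_div]
  · exact integral_mono (hi1.sub hi2) (hi.div_const T) fun x => sub_min_le _ _ hT
  · refine integral_nonneg fun x => ?_
    simp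

lemma mom_tendsto {μs : ℕ → Measure ℝ} {μ : Measure ℝ} [∀ n, IsProbabilityMeasure (μs n)]
    [IsProbabilityMeasure μ] (h : TendstoInLaw μs μ) (f : ℝ → ℝ) (hf : Continuous f)
    (h0 : ∀ x, 0 ≤ f x) (hi : ∀ n, Integrable (fun x => f x ^ 2) (μs n))
    (hi' : Integrable (fun x => f x ^ 2) μ) (D : ℝ)
    (hD : ∀ᶠ n in atTop, ∫ x, f x ^ 2 ∂μs n ≤ D) (hD' : ∫ x, f x ^ 2 ∂μ ≤ D) :
    Tendsto (fun n => ∫ x, f x ∂μs n) atTop (𝓝 (∫ x, f x ∂μ)) := by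
  have hDnn : 0 ≤ D := le_trans (integral_nonneg fun x => sq_nonneg _) hD'
  rw [Metric.tendsto_nhds]
  intro ε hε
  set T := 4 * (D + 1) / ε with hT
  have hTp : 0 < T := by positivity
  have hDT : D / T < ε / 3 := by
    rw [div_lt_iff₀ hTp, hT]
    field_simp
    linarith
  have hlim := law_bdd h (fun x => min (f x) T) (hf.min continuous_const) T (fun x => by
    rw [abs_of_nonneg (le_min (h0 x) hTp.le)]; exact min_le_right _ _)
  rw [Metric.tendsto_nhds] at hlim
  filter_upwards [hD, hlim (ε / 3) (by positivity)] with n h1 h2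
  rw [Real.dist_eq] at h2 ⊢
  have e1 := (trunc_err (μs n) f hf h0 (hi n) T hTp).trans
    (div_le_div_of_nonneg_right h1 hTp.le)
  have e2 := (trunc_err μ f hf h0 hi' T hTp).trans (div_le_div_of_nonneg_right hD' hTp.le)
  rw [abs_le] at e1 e2
  rw [abs_lt] at h2 ⊢
  constructor <;> linarith [e1.1, e1.2, e2.1, e2.2, h2.1, h2.2]

lemma gm2 : ∫ x : ℝ, x ^ 2 ∂gaussianReal 0 1 = 1 := by
  have := mom_rec 1; simpa using this

lemma gm4 : ∫ x : ℝ, x ^ 4 ∂gaussianReal 0 1 = 3 := by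
  have := mom_rec 3; simp [gm2] at this; simpa using this

lemma point_bound (x M S : ℝ) (hM : 0 < M) (hS : 0 < S) :
    x ^ 2 ≤ M + S * min (x ^ 2 / M) 1 + x ^ 4 / S := by
  have h4 : 0 ≤ x ^ 4 / S := by positivity
  rcases le_total (x ^ 2) M with h | h
  · have : 0 ≤ S * min (x ^ 2 / M) 1 := by positivity
    linarith
  · rw [min_eq_right ((one_le_div hM).mpr h)]
    have : x ^ 2 ≤ S + x ^ 4 / S := by
      rw [← sub_nonneg]
      have : S + x ^ 4 / S - x ^ 2 = ((S - x ^ 2 / 2) ^ 2 + 3 / 4 * x ^ 4) / S := by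
        field_simp; ring
      rw [this]; positivity
    linarith

lemma var_bdd {μs : ℕ → Measure ℝ} [∀ n, IsProbabilityMeasure (μs n)]
    (h : TendstoInLaw μs (gaussianReal 0 1)) (hi : ∀ n p, Integrable (fun x : ℝ => x ^ p) (μs n))
    (c : ℝ) (hc : 1 ≤ c) (h4 : ∀ n, ∫ x, x ^ 4 ∂μs n ≤ c * (∫ x, x ^ 2 ∂μs n) ^ 2) :
    ∀ᶠ n in atTop, ∫ x, x ^ 2 ∂μs n ≤ 64 * c := by
  set M := 16 * c with hM
  have hMp : 0 < M := by positivity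
  have hcont : Continuous (fun x : ℝ => min (x ^ 2 / M) 1) := by fun_prop
  have hb : ∀ x : ℝ, |min (x ^ 2 / M) 1| ≤ 1 := fun x => by
    rw [abs_of_nonneg (by positivity)]; exact min_le_right _ _
  have hlim := law_bdd h (fun x => min (x ^ 2 / M) 1) hcont 1 hb
  have hintg : ∀ ν : Measure ℝ, IsProbabilityMeasure ν →
      Integrable (fun x : ℝ => min (x ^ 2 / M) 1) ν := fun ν _ =>
    (integrable_const (1 : ℝ)).mono' hcont.aestronglyMeasurable
      (Filter.Eventually.of_forall fun x => by rw [Real.norm_eq_abs]; exact hb x)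
  have hle : ∫ x, min (x ^ 2 / M) 1 ∂gaussianReal 0 1 < 2 / M := by
    have : ∫ x, min (x ^ 2 / M) 1 ∂gaussianReal 0 1 ≤ ∫ x, x ^ 2 / M ∂gaussianReal 0 1 :=
      integral_mono (hintg _ inferInstance) ((int_pow1 2).div_const M) fun x => min_le_left _ _
    rw [integral_div, gm2] at this
    refine this.trans_lt ?_
    exact div_lt_div_of_pos_right (by norm_num) hMp
  filter_upwards [hlim.eventually_lt_const hle] with n hn
  set V := ∫ x, x ^ 2 ∂μs n with hV
  rcases le_or_gt V 0 with hV0 | hV0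
  · linarith
  have hS : 0 < 2 * c * V := by positivity
  have hmono : V ≤ ∫ x, (M + 2 * c * V * min (x ^ 2 / M) 1 + x ^ 4 / (2 * c * V)) ∂μs n :=
    integral_mono (hi n 2) (((integrable_const M).add ((hintg _ inferInstance).const_mul _)).add
      ((hi n 4).div_const _)) fun x => point_bound x M _ hMp hS
  have i1 : Integrable (fun x : ℝ => M + 2 * c * V * min (x ^ 2 / M) 1) (μs n) :=
    (integrable_const M).add ((hintg _ inferInstance).const_mul _)
  rw [integral_add i1 ((hi n 4).div_const _), integral_add (integrable_const M)
      ((hintg _ inferInstance).const_mul _), integral_div] at hmono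
  rw [integral_const_mul (2 * c * V) (fun x : ℝ => min (x ^ 2 / M) 1)] at hmono
  simp only [integral_const, probReal_univ, one_smul] at hmono
  have e1 : 2 * c * V * ∫ x, min (x ^ 2 / M) 1 ∂μs n ≤ 2 * c * V * (2 / M) :=
    mul_le_mul_of_nonneg_left hn.le hS.le
  have e2 : 2 * c * V * (2 / M) = V / 4 := by rw [hM]; field_simp; norm_num
  have e3 : (∫ x, x ^ 4 ∂μs n) / (2 * c * V) ≤ V / 2 := by
    rw [div_le_iff₀ hS]
    refine (h4 n).trans (le_of_eq ?_)
    rw [← hV]; ring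
  linarith

lemma law_moments {μs : ℕ → Measure ℝ} [∀ n, IsProbabilityMeasure (μs n)]
    (h : TendstoInLaw μs (gaussianReal 0 1)) (hi : ∀ n p, Integrable (fun x : ℝ => x ^ p) (μs n))
    (c : ℝ) (hc : 1 ≤ c) (h4 : ∀ n, ∫ x, x ^ 4 ∂μs n ≤ c * (∫ x, x ^ 2 ∂μs n) ^ 2)
    (h8 : ∀ n, ∫ x, x ^ 8 ∂μs n ≤ c * (∫ x, x ^ 2 ∂μs n) ^ 4) :
    Tendsto (fun n => ∫ x, x ^ 2 ∂μs n) atTop (𝓝 1) ∧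
      Tendsto (fun n => ∫ x, x ^ 4 ∂μs n) atTop (𝓝 3) := by
  have hV := var_bdd h hi c hc h4
  have hnn : ∀ n, 0 ≤ ∫ x, x ^ 2 ∂μs n := fun n => integral_nonneg fun x => sq_nonneg x
  have hc0 : 0 ≤ c := by linarith
  have p4 : ∀ x : ℝ, (x ^ 2) ^ 2 = x ^ 4 := fun x => by ring
  have p8 : ∀ x : ℝ, (x ^ 4) ^ 2 = x ^ 8 := fun x => by ring
  constructor
  · rw [← gm2]
    refine mom_tendsto h (fun x => x ^ 2) (by fun_prop) (fun x => by positivity) (fun n => ?_) ?_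
      (max (c * (64 * c) ^ 2) (∫ x, (x ^ 2) ^ 2 ∂gaussianReal 0 1)) ?_ (le_max_right _ _)
    · simp_rw [p4]; exact hi n 4
    · simp_rw [p4]; exact int_pow1 4
    · filter_upwards [hV] with n hn
      refine le_trans ?_ (le_max_left _ _)
      simp_rw [p4]
      exact (h4 n).trans (mul_le_mul_of_nonneg_left (pow_le_pow_left₀ (hnn n) hn 2) hc0)
  · rw [← gm4]
    refine mom_tendsto h (fun x => x ^ 4) (by fun_prop) (fun x => by positivity) (fun n => ?_) ?_
      (max (c * (64 * c) ^ 4) (∫ x, (x ^ 4) ^ 2 ∂gaussianReal 0 1)) ?_ (le_max_right _ _)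
    · simp_rw [p8]; exact hi n 8
    · simp_rw [p8]; exact int_pow1 8
    · filter_upwards [hV] with n hn
      refine le_trans ?_ (le_max_left _ _)
      simp_rw [p8]
      exact (h8 n).trans (mul_le_mul_of_nonneg_left (pow_le_pow_left₀ (hnn n) hn 4) hc0)

/-- Central limit theorem for iterated sharp operators on a Wiener chaos of
degree `m`: if `F_n → N(0,1)` in law then `♯^k[F_n] → N(0, m(m−1)⋯(m−k+1))` in law. -/
theorem sharp_operator_clt (m k : ℕ) (hk1 : 1 ≤ k) (hkm : k ≤ m) (K : ℕ → ℕ)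
    (P : (n : ℕ) → MvPolynomial (Fin (K n)) ℝ)
    (hchaos : ∀ n, P n ∈ chaos (K n) m)
    (hlaw : TendstoInLaw
      (fun n => Measure.map (fun x => eval x (P n)) (gaussPi (Fin (K n))))
      (gaussianReal 0 1)) :
    TendstoInLaw
      (fun n => Measure.map (fun y => eval y (sharpPoly k (P n)))
        (gaussPi (Fin (K n) ⊕ Fin k × Fin (K n))))
      (gaussianReal 0 (m.descFactorial k : ℝ≥0)) := by
  have hL : ∀ n, Lop (P n) = (-(m : ℝ)) • P n := fun n => chaos_eigen _ (hchaos n)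
  obtain ⟨c, hc, hyp⟩ := hyper8 m
  have hpm : ∀ n, IsProbabilityMeasure (Measure.map (fun x => eval x (P n))
      (gaussPi (Fin (K n)))) := fun n =>
    Measure.isProbabilityMeasure_map (meas_eval _).measurable.aemeasurable
  have hmom : ∀ n p, ∫ x, x ^ p ∂(Measure.map (fun x => eval x (P n)) (gaussPi (Fin (K n))))
      = Ex (P n ^ p) := by
    intro n p
    rw [integral_map (meas_eval _).measurable.aemeasurable (by fun_prop), Ex_def]
    simp only [map_pow]
  have hintg : ∀ n p, Integrable (fun x : ℝ => x ^ p)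
      (Measure.map (fun x => eval x (P n)) (gaussPi (Fin (K n)))) := by
    intro n p
    rw [integrable_map_measure (by fun_prop) (meas_eval _).measurable.aemeasurable]
    have := int_poly (P n ^ p)
    simp only [map_pow] at this
    exact this
  obtain ⟨h2, h4⟩ := law_moments hlaw hintg c hc
    (fun n => by
      rw [hmom, hmom]; exact (hyp _ (P n) (eigen_deg m _ (hL n))).1)
    (fun n => by
      rw [hmom, hmom]; exact (hyp _ (P n) (eigen_deg m _ (hL n))).2)
  simp_rw [hmom] at h2 h4
  exact main_of_moments m k hk1 hkm K P hL h2 h4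
end

section
/- Fix d, m ∈ ℕ. Let (F⃗_n) be a sequence of random vectors F⃗_n = (P_{n,1}(N^{(n)}), …, P_{n,d}(N^{(n)})), N^{(n)} ~ γ_{K_n}, where each P_{n,i} is a polynomial of total degree at most m, and assume sup_n E[‖F⃗_n‖²] < ∞. Assume that for every sequence (a⃗_n) in the unit sphere S^{d−1} ⊂ ℝ^d and every q ≥ 1, limsup_{n→∞} E[ Γ[F⃗_n·a⃗_n, F⃗_n·a⃗_n]^{−q} ] < ∞, where Γ[F⃗_n·a⃗, F⃗_n·a⃗] := Σ_{k=1}^{K_n} ( Σ_{i=1}^d a_i ∂_k P_{n,i}(N^{(n)}) )². Then for every q ≥ 1, limsup_{n→∞} E[ (det Γ(F⃗_n))^{−q} ] < ∞, where Γ(F⃗_n)_{ij} := Σ_{k=1}^{K_n} ∂_k P_{n,i}(N^{(n)}) ∂_k P_{n,j}(N^{(n)}). -/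
open MeasureTheory ProbabilityTheory MvPolynomial Filter Topology
open scoped ENNReal NNReal

/-- The Malliavin matrix of a vector of polynomial functionals. -/
noncomputable def malMatrix {K d : ℕ} (P : Fin d → MvPolynomial (Fin K) ℝ) (x : Fin K → ℝ) :
    Matrix (Fin d) (Fin d) ℝ :=
  Matrix.of fun i j => ∑ k, eval x (pderiv k (P i)) * eval x (pderiv k (P j))


lemma du_jensen {α : Type*} [MeasurableSpace α] (ν : Measure α) (p : ℕ) (hp : 2 ≤ p)
    (f : α → ℝ≥0∞) (hf : AEMeasurable f ν) :
    (∫⁻ a, f a ∂ν) ^ p ≤ (ν Set.univ) ^ (p - 1) * ∫⁻ a, f a ^ p ∂ν := by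
  have hp' : (1 : ℝ) < p := by exact_mod_cast hp
  have hpq := Real.HolderConjugate.conjExponent hp'
  have h := ENNReal.lintegral_mul_le_Lp_mul_Lq ν hpq hf (aemeasurable_const (b := (1 : ℝ≥0∞)))
  have hp0 : (p : ℝ) ≠ 0 := by positivity
  have hp1 : (p : ℝ) - 1 ≠ 0 := by linarith
  have h2 := pow_le_pow_left₀ (zero_le) h p
  simp only [Pi.mul_apply, mul_one, ENNReal.one_rpow, lintegral_const, one_mul] at h2
  refine h2.trans (le_of_eq ?_)
  rw [mul_pow, ← ENNReal.rpow_natCast, ← ENNReal.rpow_natCast, ← ENNReal.rpow_mul,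
    ← ENNReal.rpow_mul, ← ENNReal.rpow_natCast, one_div_mul_cancel hp0, ENNReal.rpow_one, mul_comm]
  congr 1
  · congr 1
    rw [Real.conjExponent, Nat.cast_sub (by omega)]
    push_cast
    field_simp
  · simp

lemma du_unif {α : ℕ → Type} (I : (n : ℕ) → α n → ℝ≥0∞) [∀ n, Nonempty (α n)]
    (h : ∀ a : (n : ℕ) → α n, limsup (fun n => I n (a n)) atTop < ⊤) :
    ∃ M : ℝ≥0∞, M ≠ ⊤ ∧ ∀ᶠ n in atTop, ∀ b, I n b ≤ M := by
  have key : ∀ n, ∃ a, ∀ b, min (I n b) n ≤ I n a + 1 := by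
    intro n
    by_contra! hcon
    have hk : ∀ k : ℕ, ∃ a, (k : ℝ≥0∞) ≤ I n a := by
      intro k
      induction k with
      | zero => exact ⟨Classical.arbitrary _, by simp⟩
      | succ k ih =>
        obtain ⟨a, ha⟩ := ih
        obtain ⟨b, hb⟩ := hcon a
        refine ⟨b, ?_⟩
        push_cast
        calc (k : ℝ≥0∞) + 1 ≤ I n a + 1 := by gcongr
          _ ≤ _ := hb.le.trans (min_le_left _ _)
    obtain ⟨a, ha⟩ := hk n
    obtain ⟨b, hb⟩ := hcon a
    have := hb.trans_le (min_le_right _ _)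
    exact absurd (this.trans_le ha) (not_lt.2 le_self_add)
  choose a ha using key
  obtain ⟨M, hM1, hM2⟩ := exists_between (h a)
  refine ⟨M + 1, by simp [hM2.ne], ?_⟩
  obtain ⟨N, hN⟩ := ENNReal.exists_nat_gt (show M + 1 ≠ ⊤ by simp [hM2.ne])
  filter_upwards [eventually_lt_of_limsup_lt hM1, eventually_ge_atTop N] with n hn hnN b
  have h1 : min (I n b) n ≤ M + 1 := (ha n b).trans (by gcongr)
  rcases min_le_iff.1 h1 with h2 | h2
  · exact h2
  · exfalso
    have : (N : ℝ≥0∞) ≤ n := by exact_mod_cast hnN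
    exact absurd (hN.trans_le (this.trans h2)) (lt_irrefl _)

/-- normalisation to the Euclidean unit sphere -/
noncomputable def duU {d : ℕ} (a : Fin d → ℝ) : Fin d → ℝ := (√(a ⬝ᵥ a))⁻¹ • a

lemma duU_meas {d : ℕ} : Measurable (duU (d := d)) := by
  unfold duU dotProduct
  fun_prop

lemma du_dot_pos {d : ℕ} {a : Fin d → ℝ} (ha : a ≠ 0) : 0 < a ⬝ᵥ a := by
  have h1 : 0 ≤ a ⬝ᵥ a := by unfold dotProduct; exact Finset.sum_nonneg fun i _ => mul_self_nonneg _
  exact lt_of_le_of_ne h1 (fun h => ha (dotProduct_self_eq_zero.1 h.symm))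

lemma duU_unit {d : ℕ} {a : Fin d → ℝ} (ha : a ≠ 0) : ∑ i, (duU a i) ^ 2 = 1 := by
  have h := du_dot_pos ha
  have : ∑ i, (duU a i) ^ 2 = (√(a ⬝ᵥ a))⁻¹ ^ 2 * (a ⬝ᵥ a) := by
    simp only [duU, Pi.smul_apply, smul_eq_mul, dotProduct, Finset.mul_sum]
    refine Finset.sum_congr rfl fun i _ => by ring
  rw [this, inv_pow, Real.sq_sqrt h.le, inv_mul_cancel₀ h.ne']

lemma duU_quad {d : ℕ} {a : Fin d → ℝ} (ha : a ≠ 0) (S : Matrix (Fin d) (Fin d) ℝ) :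
    a ⬝ᵥ S.mulVec a = (a ⬝ᵥ a) * (duU a ⬝ᵥ S.mulVec (duU a)) := by
  have h := du_dot_pos ha
  simp only [duU, Matrix.mulVec_smul, smul_dotProduct, dotProduct_smul, smul_eq_mul]
  rw [← mul_assoc (√(a ⬝ᵥ a))⁻¹, ← mul_inv, Real.mul_self_sqrt h.le, ← mul_assoc,
    mul_inv_cancel₀ h.ne', one_mul]

lemma du_norm_sq {d : ℕ} (a : Fin d → ℝ) : ‖a‖ ^ 2 ≤ a ⬝ᵥ a := by
  have h1 : 0 ≤ a ⬝ᵥ a := by unfold dotProduct; exact Finset.sum_nonneg fun i _ => mul_self_nonneg _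
  have : ‖a‖ ≤ √(a ⬝ᵥ a) := by
    rw [pi_norm_le_iff_of_nonneg (Real.sqrt_nonneg _)]
    intro i
    apply Real.le_sqrt_of_sq_le
    rw [Real.norm_eq_abs, sq_abs, sq]
    exact Finset.single_le_sum (f := fun i => a i * a i) (fun i _ => mul_self_nonneg _)
      (Finset.mem_univ i)
  calc ‖a‖ ^ 2 ≤ √(a ⬝ᵥ a) ^ 2 := by gcongr
    _ = _ := Real.sq_sqrt h1

lemma du_real (t g : ℝ) (ht : 0 ≤ t) (hg : 0 < g) (h : t ^ 2 * g ≤ 1) (r : ℕ) :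
    ((1 + t) ^ 2) ^ r ≤ 4 ^ r * (1 + (g ^ r)⁻¹) := by
  have h1 : t ^ 2 ≤ g⁻¹ := by rw [← one_div, le_div_iff₀ hg]; exact h
  have h2 : (1 + t) ^ 2 ≤ 2 * (1 + g⁻¹) := by nlinarith [sq_nonneg (t - 1)]
  calc ((1 + t) ^ 2) ^ r ≤ (2 * (1 + g⁻¹)) ^ r := by gcongr
    _ = 2 ^ r * (1 + g⁻¹) ^ r := mul_pow _ _ _
    _ ≤ 2 ^ r * (2 ^ (r - 1) * (1 ^ r + g⁻¹ ^ r)) := by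
      gcongr; exact add_pow_le zero_le_one (by positivity) r
    _ ≤ 2 ^ r * (2 ^ r * (1 ^ r + g⁻¹ ^ r)) := by
      gcongr
      · norm_num
      · omega
    _ = _ := by rw [← mul_assoc, ← mul_pow, one_pow, inv_pow]; norm_num

lemma du_vol {d : ℕ} (S : Matrix (Fin d) (Fin d) ℝ) (hS : S.PosDef) (q : ℕ) :
    (volume {a : Fin d → ℝ | a ⬝ᵥ S.mulVec a ≤ 1}) ^ (2 * q) =
      (ENNReal.ofReal S.det ^ q)⁻¹ * (volume {a : Fin d → ℝ | a ⬝ᵥ a ≤ 1}) ^ (2 * q) := by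
  obtain ⟨B, hB⟩ : ∃ B : Matrix (Fin d) (Fin d) ℝ, S = B.transpose * B := by
    open scoped MatrixOrder in
    obtain ⟨B, hB⟩ := CStarAlgebra.nonneg_iff_eq_star_mul_self.1 hS.posSemidef.nonneg
    exact ⟨B, by rw [hB, Matrix.star_eq_conjTranspose, Matrix.conjTranspose_eq_transpose_of_trivial]⟩
  have hdet : S.det = B.det ^ 2 := by rw [hB, Matrix.det_mul, Matrix.det_transpose, sq]
  have hpos := hS.det_pos
  have hB0 : B.det ≠ 0 := by
    intro h; rw [hdet, h] at hpos; simp at hpos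
  have hset : {a : Fin d → ℝ | a ⬝ᵥ S.mulVec a ≤ 1} =
      (Matrix.toLin' B) ⁻¹' {a : Fin d → ℝ | a ⬝ᵥ a ≤ 1} := by
    ext a
    simp only [Set.mem_ofPred_eq, Set.mem_preimage, Matrix.toLin'_apply]
    rw [hB, ← Matrix.mulVec_mulVec, Matrix.dotProduct_mulVec, Matrix.vecMul_transpose]
  rw [hset, Measure.addHaar_preimage_linearMap _ (by rwa [LinearMap.det_toLin']),
    LinearMap.det_toLin', mul_pow, hdet, ← ENNReal.ofReal_pow (by positivity),
    ← ENNReal.ofReal_pow (sq_nonneg _), ← ENNReal.ofReal_inv_of_pos (by positivity)]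
  congr 2
  rw [abs_inv, inv_pow, pow_mul, sq_abs]

lemma du_pw (d q : ℕ) (hd : 0 < d) (hq : 1 ≤ q) :
    ∃ C : ℝ≥0∞, C ≠ ⊤ ∧ ∃ ν : Measure (Fin d → ℝ), IsFiniteMeasure ν ∧ ν ≪ volume ∧
      ∀ S : Matrix (Fin d) (Fin d) ℝ, S.PosDef →
        (ENNReal.ofReal S.det ^ q)⁻¹ ≤ C * ∫⁻ a,
          (1 + (ENNReal.ofReal (duU a ⬝ᵥ S.mulVec (duU a)) ^ (q * (d + 1)))⁻¹) ∂ν := by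
  have : Nonempty (Fin d) := ⟨⟨0, hd⟩⟩
  set w : (Fin d → ℝ) → ℝ≥0∞ := fun a => ENNReal.ofReal ((1 + ‖a‖) ^ (-((d + 1 : ℕ) : ℝ))) with hw
  have hwm : Measurable w := by fun_prop
  set ν := (volume : Measure (Fin d → ℝ)).withDensity w with hν
  have hνfin : IsFiniteMeasure ν := by
    refine isFiniteMeasure_withDensity ?_
    exact (finite_integral_one_add_norm (by simp)).ne
  have hac : ν ≪ volume := withDensity_absolutelyContinuous _ _
  set V := volume {a : Fin d → ℝ | a ⬝ᵥ a ≤ 1} with hV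
  have hcont : Continuous fun a : Fin d → ℝ => a ⬝ᵥ a := by unfold dotProduct; fun_prop
  have hV0 : V ≠ 0 := by
    have : volume {a : Fin d → ℝ | a ⬝ᵥ a < 1} ≠ 0 :=
      ((isOpen_lt hcont continuous_const).measure_pos volume ⟨0, by simp⟩).ne'
    intro h
    exact this (measure_mono_null (fun a (ha : a ⬝ᵥ a < 1) => ha.le) h)
  have hVt : V ≠ ⊤ := by
    refine ((measure_mono (t := Metric.closedBall 0 1) ?_).trans_lt measure_closedBall_lt_top).ne
    intro a ha
    rw [mem_closedBall_zero_iff]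
    have := (du_norm_sq a).trans ha
    nlinarith [norm_nonneg a]
  refine ⟨(V ^ (2 * q))⁻¹ * ((ν Set.univ) ^ (2 * q - 1) * ENNReal.ofReal (4 ^ (q * (d + 1)))),
    ?_, ν, hνfin, hac, ?_⟩
  · refine ENNReal.mul_ne_top (by simp [hV0]) (ENNReal.mul_ne_top ?_ ENNReal.ofReal_ne_top)
    exact ENNReal.pow_ne_top (measure_ne_top _ _)
  intro S hS
  set E := {a : Fin d → ℝ | a ⬝ᵥ S.mulVec a ≤ 1} with hE
  have hEc : Continuous fun a : Fin d → ℝ => a ⬝ᵥ S.mulVec a := by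
    unfold dotProduct Matrix.mulVec dotProduct; fun_prop
  have hEm : MeasurableSet E := (isClosed_le hEc continuous_const).measurableSet
  set f : (Fin d → ℝ) → ℝ≥0∞ := E.indicator fun a => ENNReal.ofReal ((1 + ‖a‖) ^ (d + 1)) with hf
  have hfm : Measurable f := Measurable.indicator (by fun_prop) hEm
  have hint : ∫⁻ a, f a ∂ν = volume E := by
    rw [hν, lintegral_withDensity_eq_lintegral_mul _ hwm hfm, ← lintegral_indicator_one hEm]
    refine lintegral_congr fun a => ?_
    by_cases ha : a ∈ E
    · simp only [Pi.mul_apply, hf, hw, Set.indicator_of_mem ha, Pi.one_apply]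
      rw [← ENNReal.ofReal_mul (by positivity), Real.rpow_neg (by positivity), Real.rpow_natCast,
        inv_mul_cancel₀ (by positivity), ENNReal.ofReal_one]
    · simp [hf, ha]
  have hJ := du_jensen ν (2 * q) (by omega) f hfm.aemeasurable
  rw [hint, du_vol S hS q] at hJ
  have hVq0 : V ^ (2 * q) ≠ 0 := pow_ne_zero _ hV0
  have hVqt : V ^ (2 * q) ≠ ⊤ := ENNReal.pow_ne_top hVt
  have hne : ∀ᵐ a ∂ν, a ≠ 0 := by
    exact hac.ae_le (compl_mem_ae_iff.2 (measure_singleton (0 : Fin d → ℝ)))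
  have hbound : ∫⁻ a, f a ^ (2 * q) ∂ν ≤ ENNReal.ofReal (4 ^ (q * (d + 1))) * ∫⁻ a,
          (1 + (ENNReal.ofReal (duU a ⬝ᵥ S.mulVec (duU a)) ^ (q * (d + 1)))⁻¹) ∂ν := by
    rw [← lintegral_const_mul' _ _ ENNReal.ofReal_ne_top]
    refine lintegral_mono_ae ?_
    filter_upwards [hne] with a ha
    by_cases haE : a ∈ E
    · simp only [hf, Set.indicator_of_mem haE]
      set g := duU a ⬝ᵥ S.mulVec (duU a) with hg
      have hquad := duU_quad ha S
      have hp1 : 0 < a ⬝ᵥ S.mulVec a := by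
        simpa using hS.dotProduct_mulVec_pos ha
      have hdp := du_dot_pos ha
      have hgp : 0 < g := by
        rw [hquad] at hp1
        exact pos_of_mul_pos_right hp1 hdp.le
      have hle : ‖a‖ ^ 2 * g ≤ 1 :=
        calc ‖a‖ ^ 2 * g ≤ (a ⬝ᵥ a) * g := by gcongr; exact du_norm_sq a
          _ ≤ 1 := by rw [← hquad]; exact haE
      have := du_real ‖a‖ g (norm_nonneg _) hgp hle (q * (d + 1))
      rw [← ENNReal.ofReal_pow (by positivity), ← ENNReal.ofReal_pow (by positivity),
        ← ENNReal.ofReal_inv_of_pos (by positivity), ← ENNReal.ofReal_one,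
        ← ENNReal.ofReal_add zero_le_one (by positivity), ← ENNReal.ofReal_mul (by positivity)]
      apply ENNReal.ofReal_le_ofReal
      refine le_trans (le_of_eq ?_) this
      rw [← pow_mul, ← pow_mul]; congr 1; ring
    · simp only [hf, Set.indicator_of_notMem haE]
      rw [zero_pow (by omega)]; exact zero_le
  calc (ENNReal.ofReal S.det ^ q)⁻¹
      = (V ^ (2 * q))⁻¹ * ((ENNReal.ofReal S.det ^ q)⁻¹ * V ^ (2 * q)) := by
        rw [mul_comm, mul_assoc, ENNReal.mul_inv_cancel hVq0 hVqt, mul_one]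
    _ ≤ (V ^ (2 * q))⁻¹ * (ν Set.univ ^ (2 * q - 1) * (ENNReal.ofReal (4 ^ (q * (d + 1))) * ∫⁻ a,
          (1 + (ENNReal.ofReal (duU a ⬝ᵥ S.mulVec (duU a)) ^ (q * (d + 1)))⁻¹) ∂ν)) := by
        refine mul_le_mul_right ?_ _
        exact hJ.trans (mul_le_mul_right hbound _)
    _ = _ := by simp only [mul_assoc]

lemma du_pw' (d q : ℕ) (hd : 0 < d) (hq : 1 ≤ q) :
    ∃ C : ℝ≥0∞, C ≠ ⊤ ∧ ∃ ν : Measure (Fin d → ℝ), IsFiniteMeasure ν ∧ ν ≪ volume ∧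
      ∀ S : Matrix (Fin d) (Fin d) ℝ, S.PosSemidef →
        (ENNReal.ofReal S.det ^ q)⁻¹ ≤ C * ∫⁻ a,
          (1 + (ENNReal.ofReal (duU a ⬝ᵥ S.mulVec (duU a)) ^ (q * (d + 1)))⁻¹) ∂ν := by
  obtain ⟨C, hC, ν, h1, h2, h⟩ := du_pw d q hd hq
  refine ⟨C, hC, ν, h1, h2, fun S hS => ?_⟩
  have hc : Continuous fun ε : ℝ =>
      (ENNReal.ofReal (S + ε • (1 : Matrix (Fin d) (Fin d) ℝ)).det ^ q)⁻¹ := by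
    have : Continuous fun ε : ℝ => (S + ε • (1 : Matrix (Fin d) (Fin d) ℝ)).det :=
      Continuous.matrix_det (by fun_prop)
    exact ((ENNReal.continuous_pow q).comp (ENNReal.continuous_ofReal.comp this)).inv
  have ht := (hc.tendsto 0).mono_left (nhdsWithin_le_nhds (s := Set.Ioi 0))
  simp only [zero_smul, add_zero] at ht
  refine le_of_tendsto ht ?_
  filter_upwards [self_mem_nhdsWithin] with ε hε
  have hε' : 0 < ε := hε
  refine (h _ (Matrix.PosDef.posSemidef_add hS (Matrix.PosDef.one.smul hε'))).trans ?_
  gcongr with a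
  rw [Matrix.add_mulVec, dotProduct_add, Matrix.smul_mulVec, Matrix.one_mulVec, dotProduct_smul]
  have : 0 ≤ duU a ⬝ᵥ duU a := (sq_nonneg _).trans (du_norm_sq _)
  simp only [smul_eq_mul]
  nlinarith [mul_nonneg hε'.le this]

lemma du_quad_mal {K d : ℕ} (P : Fin d → MvPolynomial (Fin K) ℝ) (x : Fin K → ℝ)
    (a : Fin d → ℝ) :
    a ⬝ᵥ (malMatrix P x).mulVec a = ∑ k, (∑ i, a i * eval x (pderiv k (P i))) ^ 2 := by
  have hG : malMatrix P x = (Matrix.of fun k i => eval x (pderiv k (P i))).transpose *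
      (Matrix.of fun k i => eval x (pderiv k (P i))) := by
    ext i j
    simp [malMatrix, Matrix.mul_apply]
  rw [hG, ← Matrix.mulVec_mulVec, Matrix.dotProduct_mulVec, Matrix.vecMul_transpose]
  simp only [dotProduct, Matrix.mulVec, Matrix.of_apply, sq, mul_comm]

lemma du_psd {K d : ℕ} (P : Fin d → MvPolynomial (Fin K) ℝ) (x : Fin K → ℝ) :
    (malMatrix P x).PosSemidef := by
  refine Matrix.PosSemidef.of_dotProduct_mulVec_nonneg ?_ fun a => ?_
  · ext i j
    simp [malMatrix, mul_comm]
  · simp only [star_trivial, du_quad_mal]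
    positivity

/-- Discretization upgrade: for an `L²`-bounded sequence of vectors of
polynomial functionals of degree at most `m`, if the negative moments of the carré du champ of
every sequence of unit-sphere projections are asymptotically bounded, then so are the negative
moments of the determinant of the Malliavin matrix. -/
theorem dimension_upgrade (d m : ℕ) (K : ℕ → ℕ)
    (P : (n : ℕ) → Fin d → MvPolynomial (Fin (K n)) ℝ)
    (hdeg : ∀ n i, (P n i).totalDegree ≤ m)
    (hL2 : ∃ B : ℝ, ∀ n,
      ∫⁻ x, ENNReal.ofReal (∑ i, (eval x (P n i)) ^ 2) ∂gaussPi (Fin (K n))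
        ≤ ENNReal.ofReal B)
    (hsphere : ∀ a : (n : ℕ) → Fin d → ℝ, (∀ n, ∑ i, (a n i) ^ 2 = 1) →
      ∀ q : ℕ, 1 ≤ q →
        Filter.limsup
          (fun n => ∫⁻ x,
            (ENNReal.ofReal (∑ k, (∑ i, a n i * eval x (pderiv k (P n i))) ^ 2) ^ q)⁻¹
            ∂gaussPi (Fin (K n)))
          atTop < ⊤) :
    ∀ q : ℕ, 1 ≤ q →
      Filter.limsup
        (fun n => ∫⁻ x, (ENNReal.ofReal ((malMatrix (P n) x).det) ^ q)⁻¹ ∂gaussPi (Fin (K n)))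
        atTop < ⊤ := by
  intro q hq
  have hprob : ∀ n, IsProbabilityMeasure (gaussPi (Fin (K n))) := fun n => by
    unfold gaussPi; infer_instance
  rcases Nat.eq_zero_or_pos d with rfl | hd
  · simp [Matrix.det_isEmpty]
  obtain ⟨C, hC, ν, hν, hac, h⟩ := du_pw' d q hd hq
  set r := q * (d + 1) with hr
  have hr1 : 1 ≤ r := Nat.mul_pos hq (by omega)
  have : Nonempty {a : Fin d → ℝ // ∑ i, a i ^ 2 = 1} :=
    ⟨⟨duU (fun _ => 1), duU_unit (fun h0 => by simpa using congrFun h0 ⟨0, hd⟩)⟩⟩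
  obtain ⟨M, hM, hev⟩ := du_unif (α := fun _ => {a : Fin d → ℝ // ∑ i, a i ^ 2 = 1})
    (fun n a => ∫⁻ x,
            (ENNReal.ofReal (∑ k, (∑ i, a.1 i * eval x (pderiv k (P n i))) ^ 2) ^ r)⁻¹
            ∂gaussPi (Fin (K n)))
    (fun a => hsphere (fun n => (a n).1) (fun n => (a n).2) r hr1)
  have : Nonempty (Fin d) := ⟨⟨0, hd⟩⟩
  have hne : ∀ᵐ a ∂ν, a ≠ 0 := by
    exact hac.ae_le (compl_mem_ae_iff.2 (measure_singleton (0 : Fin d → ℝ)))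
  refine lt_of_le_of_lt (b := C * ((1 + M) * ν Set.univ)) ?_ ?_
  swap
  · refine (ENNReal.mul_ne_top hC (ENNReal.mul_ne_top ?_ (measure_ne_top _ _))).lt_top
    simp [hM]
  refine limsup_le_of_le (by isBoundedDefault) ?_
  filter_upwards [hev] with n hn
  have hpm : ∀ p : MvPolynomial (Fin (K n)) ℝ, Measurable fun x : Fin (K n) → ℝ => eval x p :=
    fun p => (MvPolynomial.continuous_eval p).measurable
  have hmeas : Measurable fun z : (Fin (K n) → ℝ) × (Fin d → ℝ) =>
      1 + (ENNReal.ofReal (∑ k, (∑ i, duU z.2 i * eval z.1 (pderiv k (P n i))) ^ 2) ^ r)⁻¹ := by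
    have h1 : ∀ k i, Measurable fun z : (Fin (K n) → ℝ) × (Fin d → ℝ) =>
        duU z.2 i * eval z.1 (pderiv k (P n i)) := fun k i =>
      ((measurable_pi_apply i).comp (duU_meas.comp measurable_snd)).mul
        ((hpm _).comp measurable_fst)
    fun_prop
  calc ∫⁻ x, (ENNReal.ofReal ((malMatrix (P n) x).det) ^ q)⁻¹ ∂gaussPi (Fin (K n))
      ≤ ∫⁻ x, C * ∫⁻ a, (1 + (ENNReal.ofReal
          (∑ k, (∑ i, duU a i * eval x (pderiv k (P n i))) ^ 2) ^ r)⁻¹) ∂ν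
          ∂gaussPi (Fin (K n)) := by
        refine lintegral_mono fun x => ?_
        simpa only [du_quad_mal] using h _ (du_psd (P n) x)
    _ = C * ∫⁻ x, ∫⁻ a, (1 + (ENNReal.ofReal
          (∑ k, (∑ i, duU a i * eval x (pderiv k (P n i))) ^ 2) ^ r)⁻¹) ∂ν
          ∂gaussPi (Fin (K n)) := lintegral_const_mul' _ _ hC
    _ = C * ∫⁻ a, ∫⁻ x, (1 + (ENNReal.ofReal
          (∑ k, (∑ i, duU a i * eval x (pderiv k (P n i))) ^ 2) ^ r)⁻¹) ∂gaussPi (Fin (K n))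
          ∂ν := by
        rw [lintegral_lintegral_swap hmeas.aemeasurable]
    _ ≤ C * ∫⁻ a, (1 + M) ∂ν := by
        gcongr 1
        refine lintegral_mono_ae ?_
        filter_upwards [hne] with a ha
        rw [lintegral_add_left measurable_const]
        simp only [lintegral_const, measure_univ, mul_one]
        gcongr
        exact hn ⟨duU a, duU_unit ha⟩
    _ = _ := by rw [lintegral_const]
end
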